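/- arXiv:1302.4251 — 3 statements merged into one kernel-verified Lean document; each statement's English description precedes it below -/
import Mathlib

section
/- Let s ∈ ℕ and let q be a prime number. Then there exists a constant c = c(q,s) > 0, depending only on q and s, such that for μ_s-almost all s-tuples (C₁,…,C_s) ∈ ((ZMod q)^{ℕ×ℕ})^s of generating matrices, the digital sequence S(C₁,…,C_s) over ZMod q has star discrepancy satisfying D*_N(S(C₁,…,C_s)) ≥ c · (log N)^s · log log N for infinitely many N ∈ ℕ. -/
open MeasureTheory Filter
open scoped ENNReal

noncomputable section

/-- The base-`q` digit vector `k⃗ = (κ₀, κ₁, κ₂, …)` of a natural number `k`,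
with values in `ZMod q`. -/
def digitVec (q k : ℕ) : ℕ → ZMod q := fun i => ((k / q ^ i) % q : ℕ)

/-- `len q k = ⌊log_q k⌋`, the index of the leading base-`q` digit of `k`. -/
def len (q k : ℕ) : ℕ := Nat.log q k

/-- Transpose of an `ℕ × ℕ` matrix over `ZMod q`. -/
def transp {q : ℕ} (C : ℕ → ℕ → ZMod q) : ℕ → ℕ → ZMod q := fun i j => C j i

/-- The matrix `C` applied to the digit vector of `k` (a finite sum, since the digit
vector of `k` is supported on indices `≤ k`), all arithmetic modulo `q`. -/
def matVec {q : ℕ} (C : ℕ → ℕ → ZMod q) (k : ℕ) : ℕ → ZMod q :=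
  fun i => ∑ j ∈ Finset.range (k + 1), C i j * digitVec q k j

/-- `nuLe b m` expresses `ν(b⃗) ≤ -m` for `b⃗ = (b₁, b₂, …) = (b 0, b 1, …)`:
the first `m - 1` coordinates of `b⃗` vanish.  (In particular it holds for `b⃗ = 0⃗`,
where `ν(0⃗) = -∞`.) -/
def nuLe {q : ℕ} (b : ℕ → ZMod q) (m : ℕ) : Prop := ∀ i, i < m - 1 → b i = 0

/-- `ω_q = exp(2πi/q)`. -/
def omega (q : ℕ) : ℂ := Complex.exp (2 * Real.pi * Complex.I / q)

/-- The value of the `j`-th `q`-adic Walsh function on a digit vector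
`v⃗ = (v₁, v₂, …) = (v 0, v 1, …)`: with `j = j₀ + j₁ q + ⋯`, this is
`ω_q^(j₀ v₁ + j₁ v₂ + ⋯)`, the exponent computed in `ZMod q` (a finite sum, since all
base-`q` digits of `j` with index `≥ j` vanish). -/
def wal (q j : ℕ) (v : ℕ → ZMod q) : ℂ :=
  omega q ^ (∑ i ∈ Finset.range (j + 1), digitVec q j i * v i).val

/-- The digit `ξ_{i+1} ∈ ZMod q` of the `q`-adic expansion
`x = ξ₁ q⁻¹ + ξ₂ q⁻² + ⋯` of `x ∈ [0,1)` (the expansion with infinitely many digits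
different from `q - 1`). -/
def realDigit (q : ℕ) (x : ℝ) : ℕ → ZMod q := fun i => ((⌊x * (q : ℝ) ^ (i + 1)⌋ : ℤ) : ZMod q)

/-- The `j`-th `q`-adic Walsh function `wal_j : [0,1) → ℂ`. -/
def walReal (q j : ℕ) (x : ℝ) : ℂ := wal q j (realDigit q x)

/-- The digital sequence over `ZMod q` with generating matrices `C 1, …, C s`:
the `j`-th coordinate of the `n`-th point is `x_{n,j} = Σ_i (C_j n⃗)_i q^{-(i+1)}`. -/
def digitalSeq {q s : ℕ} (C : Fin s → ℕ → ℕ → ZMod q) (n : ℕ) : Fin s → ℝ :=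
  fun j => ∑' i : ℕ, ((matVec (C j) n i).val : ℝ) / (q : ℝ) ^ (i + 1)

/-- The local discrepancy `D(x, N)` of the sequence `y` in `[0,1)^s`. -/
def localDisc {s : ℕ} (y : ℕ → Fin s → ℝ) (x : Fin s → ℝ) (N : ℕ) : ℝ :=
  (Nat.card {n : ℕ | n < N ∧ ∀ j, y n j ∈ Set.Ico 0 (x j)} : ℝ) - N * ∏ j, x j

/-- The star discrepancy `D*_N` of the sequence `y` in `[0,1)^s`. -/
def starDisc {s : ℕ} (y : ℕ → Fin s → ℝ) (N : ℕ) : ℝ :=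
  sSup {d : ℝ | ∃ x : Fin s → ℝ, (∀ j, x j ∈ Set.Icc (0 : ℝ) 1) ∧ d = |localDisc y x N|}

/-- `IsUniformMatrixMeasure μ` says that `μ` is the measure `μ` of the paper on the
space `(ZMod q)^{ℕ×ℕ}` of `ℕ × ℕ` matrices over `ZMod q`: the product over `ℕ × ℕ` of
uniform probability measures on `ZMod q`, characterized as the probability measure
giving each finite cylinder set (finitely many prescribed entries) the measure
`q^{-(number of prescribed entries)}`. -/
def IsUniformMatrixMeasure {q : ℕ} (μ : Measure (ℕ → ℕ → ZMod q)) : Prop :=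
  IsProbabilityMeasure μ ∧
    ∀ (F : Finset (ℕ × ℕ)) (g : ℕ × ℕ → ZMod q),
      μ {C | ∀ p ∈ F, C p.1 p.2 = g p} = ((q : ℝ≥0∞)⁻¹) ^ F.card

/-- `IsUniformMatrixTupleMeasure μs` says that `μs` is the measure `μ_s` of the paper on
the space `((ZMod q)^{ℕ×ℕ})^s` of `s`-tuples of `ℕ × ℕ` matrices over `ZMod q`: the
`s`-fold product of the product over `ℕ × ℕ` of uniform probability measures on
`ZMod q`, characterized as the probability measure giving each finite cylinder set
(finitely many prescribed entries) the measure `q^{-(number of prescribed entries)}`. -/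
def IsUniformMatrixTupleMeasure {q s : ℕ} (μs : Measure (Fin s → ℕ → ℕ → ZMod q)) : Prop :=
  IsProbabilityMeasure μs ∧
    ∀ (F : Finset (Fin s × ℕ × ℕ)) (g : Fin s × ℕ × ℕ → ZMod q),
      μs {C | ∀ p ∈ F, C p.1 p.2.1 p.2.2 = g p} = ((q : ℝ≥0∞)⁻¹) ^ F.card

open ProbabilityTheory

/-!
Fix `k` with all coordinates nonzero and let `W` be its number of `q`-adic digits.  If the Walsh
function `wal_k` equals `1` at the first `N = q ^ M` points, that is, if `k` annihilates the first
`M` columns of the generating matrices, then no point lies in the gap `b < x < 2 b` of one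
coordinate while the others stay below `q`-adic thresholds: there the exponent of `wal_k` would be
the leading digit of `k`.  So two boxes of volume comparable to `q ^ (-W)` contain the same points,
and the discrepancy is at least of order `q ^ (M - W)`.  With `M - W` chosen so that
`q ^ (M - W)` is about `W ^ s * log W`, the required bound holds on an event of probability
`q ^ (-M)`.

Restricted to `k` with lowest digits `1`, the digit vectors are pairwise linearly independent, so
these events are pairwise independent.  Their probabilities add up to `∞` because the `k` with
`2 ^ i ≤ log_q (k j) < 2 ^ (i + 1)` for all `j` contribute about `1 / i`.  The second Borel–Cantelli
lemma for pairwise independent events then gives infinitely many `N`.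
-/

section SecondBorelCantelli

variable {Ω ι : Type*} [MeasurableSpace Ω] {μ : Measure Ω}

theorem indepFun_indicator_one {A B : Set Ω} (hAB : IndepSet A B μ) :
    IndepFun (A.indicator (1 : Ω → ℝ)) (B.indicator (1 : Ω → ℝ)) μ := by
  have comap_le (A : Set Ω) : MeasurableSpace.comap (A.indicator (1 : Ω → ℝ)) inferInstance ≤
      MeasurableSpace.generateFrom {A} :=
    Measurable.comap_le (m₁ := .generateFrom {A}) <|
      measurable_const.indicator (.basic A rfl)
  rw [IndepFun_iff_Indep]
  exact indep_of_indep_of_le_left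
    (indep_of_indep_of_le_right ((IndepSet_iff_Indep A B μ).1 hAB) (comap_le B)) (comap_le A)

theorem variance_indicator_one_le [IsProbabilityMeasure μ] {A : Set Ω} (hA : MeasurableSet A) :
    Var[A.indicator 1; μ] ≤ μ.real A := by
  have hsq : (A.indicator 1 : Ω → ℝ) ^ 2 = A.indicator 1 := by
    ext ω
    by_cases hω : ω ∈ A <;> simp [hω]
  calc Var[A.indicator 1; μ]
      ≤ μ[A.indicator 1 ^ 2] :=
        variance_le_expectation_sq (measurable_one.indicator hA).aestronglyMeasurable
    _ = μ.real A := by rw [hsq, integral_indicator_one hA]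

variable {E : ι → Set Ω} [IsProbabilityMeasure μ]

-- Chebyshev's inequality for the number of events that occur, whose variance is at most its mean.
theorem measureReal_forall_notMem_mul_sum_le_one {K : Finset ι}
    (hE : ∀ i ∈ K, MeasurableSet (E i))
    (hind : (K : Set ι).Pairwise fun i j => IndepSet (E i) (E j) μ) :
    μ.real {ω | ∀ i ∈ K, ω ∉ E i} * ∑ i ∈ K, μ.real (E i) ≤ 1 := by
  let count : Ω → ℝ := ∑ i ∈ K, (E i).indicator 1
  have hL2 : ∀ i ∈ K, MemLp ((E i).indicator (1 : Ω → ℝ)) 2 μ := fun i hi =>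
    memLp_indicator_const 2 (hE i hi) 1 (.inr (measure_ne_top _ _))
  have hmean : μ[count] = ∑ i ∈ K, μ.real (E i) := by
    simp only [count, Finset.sum_apply]
    rw [integral_finsetSum _ fun i hi => (hL2 i hi).integrable one_le_two]
    exact Finset.sum_congr rfl fun i hi => integral_indicator_one (hE i hi)
  have hvar : Var[count; μ] ≤ μ[count] := by
    rw [hmean, IndepFun.variance_sum hL2 fun i hi j hj hij =>
      indepFun_indicator_one (hind hi hj hij)]
    exact Finset.sum_le_sum fun i hi => variance_indicator_one_le (hE i hi)
  have hsub : {ω | ∀ i ∈ K, ω ∉ E i} ⊆ {ω | μ[count] ≤ |count ω - μ[count]|} := fun ω hω => by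
    have hzero : count ω = 0 := (Finset.sum_apply _ _ _).trans
      (Finset.sum_eq_zero fun i hi => Set.indicator_of_notMem (hω i hi) _)
    rw [Set.mem_ofPred_eq, hzero, zero_sub, abs_neg]
    exact le_abs_self _
  rw [← hmean]
  rcases ((variance_nonneg count μ).trans hvar).eq_or_lt with hm | hm
  · rw [← hm, mul_zero]
    exact zero_le_one
  have hcheb : μ.real {ω | ∀ i ∈ K, ω ∉ E i} ≤ Var[count; μ] / μ[count] ^ 2 :=
    ENNReal.toReal_le_of_le_ofReal (div_nonneg (variance_nonneg _ _) (sq_nonneg _))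
      ((measure_mono hsub).trans (meas_ge_le_variance_div_sq (memLp_finsetSum' K hL2) hm))
  calc μ.real {ω | ∀ i ∈ K, ω ∉ E i} * μ[count] ≤ μ[count] / μ[count] ^ 2 * μ[count] := by
        gcongr
        exact hcheb.trans (by gcongr)
    _ = 1 := by field_simp [hm.ne']

theorem ae_exists_mem_of_pairwise_indepSet (hE : ∀ i, MeasurableSet (E i))
    (hind : Pairwise fun i j => IndepSet (E i) (E j) μ)
    (hsum : ¬ Summable fun i => μ.real (E i)) : ∀ᵐ ω ∂μ, ∃ i, ω ∈ E i := by
  by_contra hnull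
  have hpos : 0 < μ.real {ω | ∀ i, ω ∉ E i} :=
    ENNReal.toReal_pos (by simpa [ae_iff] using hnull) (measure_ne_top _ _)
  refine hsum (summable_of_sum_le (c := 1 / μ.real {ω | ∀ i, ω ∉ E i})
    (fun i => measureReal_nonneg) fun K => ?_)
  rw [le_div_iff₀' hpos]
  calc μ.real {ω | ∀ i, ω ∉ E i} * ∑ i ∈ K, μ.real (E i)
      ≤ μ.real {ω | ∀ i ∈ K, ω ∉ E i} * ∑ i ∈ K, μ.real (E i) :=
        mul_le_mul_of_nonneg_right (measureReal_mono fun ω hω i _ => hω i)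
          (Finset.sum_nonneg fun _ _ => measureReal_nonneg)
    _ ≤ 1 := measureReal_forall_notMem_mul_sum_le_one (fun i _ => hE i) (hind.set_pairwise _)

theorem ae_frequently_mem_of_pairwise_indepSet [Countable ι] (hE : ∀ i, MeasurableSet (E i))
    (hind : Pairwise fun i j => IndepSet (E i) (E j) μ)
    (hsum : ¬ Summable fun i => μ.real (E i)) : ∀ᵐ ω ∂μ, ∃ᶠ i in cofinite, ω ∈ E i := by
  have houtside : ∀ T : Finset ι, ∀ᵐ ω ∂μ, ∃ i : {i // i ∉ T}, ω ∈ E i := fun T =>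
    ae_exists_mem_of_pairwise_indepSet (fun i => hE i)
      (fun _ _ hij => hind (Subtype.coe_injective.ne hij))
      ((Finset.summable_compl_iff T).not.2 hsum)
  filter_upwards [ae_all_iff.2 houtside] with ω hω
  rw [frequently_cofinite_iff_infinite]
  intro hfin
  obtain ⟨⟨i, hi⟩, hmem⟩ := hω hfin.toFinset
  exact hi (hfin.mem_toFinset.2 hmem)

end SecondBorelCantelli

section UniformMeasure

/-- The cylinder set of matrix tuples whose entries at the positions `p ∈ F` are `g p`; the entry
`(j, i, l)` stands in row `i` and column `l` of the `j`-th matrix. -/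
def entryCylinder {q s : ℕ} (F : Finset (Fin s × ℕ × ℕ)) (g : Fin s × ℕ × ℕ → ZMod q) :
    Set (Fin s → ℕ → ℕ → ZMod q) :=
  {C | ∀ p ∈ F, C p.1 p.2.1 p.2.2 = g p}

variable {q s : ℕ}

theorem isPiSystem_entryCylinder :
    IsPiSystem (Set.range (Function.uncurry (entryCylinder (q := q) (s := s)))) := by
  rintro _ ⟨⟨F, g⟩, rfl⟩ _ ⟨⟨F', g'⟩, rfl⟩ ⟨C₀, hC₀, hC₀'⟩
  refine ⟨(F ∪ F', fun p => C₀ p.1 p.2.1 p.2.2), Set.ext fun C => ?_⟩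
  change (∀ p ∈ F ∪ F', _) ↔ (∀ p ∈ F, _) ∧ ∀ p ∈ F', _
  simp only [Finset.mem_union, or_imp, forall_and]
  exact and_congr (forall₂_congr fun p hp => by rw [hC₀ p hp])
    (forall₂_congr fun p hp => by rw [hC₀' p hp])

theorem measurableSet_entryCylinder (F : Finset (Fin s × ℕ × ℕ)) (g : Fin s × ℕ × ℕ → ZMod q) :
    MeasurableSet (entryCylinder F g) := by
  have hentry (p : Fin s × ℕ × ℕ) :
      Measurable fun C : Fin s → ℕ → ℕ → ZMod q => C p.1 p.2.1 p.2.2 := by fun_prop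
  simp only [entryCylinder, Set.ofPred_forall]
  exact F.measurableSet_biInter fun p _ => hentry p (measurableSet_singleton _)

theorem generateFrom_entryCylinder [NeZero q] :
    MeasurableSpace.generateFrom (Set.range (Function.uncurry (entryCylinder (q := q) (s := s)))) =
      MeasurableSpace.pi := by
  refine le_antisymm (MeasurableSpace.generateFrom_le ?_) ?_
  · rintro _ ⟨⟨F, g⟩, rfl⟩
    exact measurableSet_entryCylinder F g
  · simp_rw [MeasurableSpace.pi, MeasurableSpace.comap_iSup, iSup_le_iff,
      MeasurableSpace.comap_comp]
    intro j i l
    rw [← measurable_iff_comap_le]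
    refine @measurable_to_countable' _ _ _ _ (_) _ fun w =>
      MeasurableSpace.measurableSet_generateFrom ⟨({(j, i, l)}, fun _ => w), Set.ext fun C => ?_⟩
    simp [entryCylinder]

namespace IsUniformMatrixTupleMeasure

variable {μ ν : Measure (Fin s → ℕ → ℕ → ZMod q)}

theorem eq [NeZero q] (hμ : IsUniformMatrixTupleMeasure μ) (hν : IsUniformMatrixTupleMeasure ν) :
    μ = ν := by
  have := hμ.1
  have := hν.1
  refine ext_of_generate_finite _ generateFrom_entryCylinder.symm isPiSystem_entryCylinder ?_
    (by rw [measure_univ, measure_univ])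
  rintro _ ⟨⟨F, g⟩, rfl⟩
  exact (hμ.2 F g).trans (hν.2 F g).symm

theorem map_add_left (hμ : IsUniformMatrixTupleMeasure μ) (D : Fin s → ℕ → ℕ → ZMod q) :
    IsUniformMatrixTupleMeasure (μ.map (D + ·)) := by
  have := hμ.1
  have hadd : Measurable (D + ·) := measurable_const_add D
  refine ⟨Measure.isProbabilityMeasure_map hadd.aemeasurable, fun F g => ?_⟩
  change μ.map (D + ·) (entryCylinder F g) = _
  rw [Measure.map_apply hadd (measurableSet_entryCylinder F g),
    ← hμ.2 F fun p => g p - D p.1 p.2.1 p.2.2]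
  congr 1 with C
  exact forall₂_congr fun p _ => eq_sub_iff_add_eq'.symm

theorem isAddLeftInvariant [NeZero q] (hμ : IsUniformMatrixTupleMeasure μ) :
    μ.IsAddLeftInvariant :=
  ⟨fun D => (hμ.map_add_left D).eq hμ⟩

end IsUniformMatrixTupleMeasure

end UniformMeasure

section SurjectiveHom

variable {G V W : Type*} [AddGroup G] [MeasurableSpace G] [MeasurableAdd G]
  [AddGroup V] [Finite V] [MeasurableSpace V] [MeasurableSingletonClass V]
  [AddGroup W] [Finite W] [MeasurableSpace W] [MeasurableSingletonClass W]
  {μ : Measure G} [IsProbabilityMeasure μ] [μ.IsAddLeftInvariant]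

theorem measureReal_preimage_singleton_of_surjective {Φ : G →+ W} (hΦ : Measurable Φ)
    (hsurj : Function.Surjective Φ) (w : W) :
    μ.real (Φ ⁻¹' {w}) = (Nat.card W : ℝ)⁻¹ := by
  have := Fintype.ofFinite W
  have hfibre (w' : W) : μ.real (Φ ⁻¹' {w'}) = μ.real (Φ ⁻¹' {w}) := by
    obtain ⟨g, hg⟩ := hsurj (w' - w)
    have hshift : (g + ·) ⁻¹' (Φ ⁻¹' {w'}) = Φ ⁻¹' {w} := by
      ext x
      change Φ (g + x) = w' ↔ Φ x = w
      rw [map_add, hg, ← eq_neg_add_iff_add_eq, neg_sub, sub_add_cancel]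
    rw [← hshift, measureReal_def, measureReal_def, measure_preimage_add]
  have htotal : ∑ w', μ.real (Φ ⁻¹' {w'}) = 1 := by
    rw [sum_measureReal_preimage_singleton _ fun w' _ => hΦ (measurableSet_singleton w'),
      Finset.coe_univ, Set.preimage_univ, probReal_univ]
  simp only [hfibre, Finset.sum_const, Finset.card_univ, ← Nat.card_eq_fintype_card,
    nsmul_eq_mul] at htotal
  exact eq_inv_of_mul_eq_one_right htotal

theorem indepSet_preimage_singleton_of_surjective_prod {Φ : G →+ V} {Ψ : G →+ W}
    (hΦ : Measurable Φ) (hΨ : Measurable Ψ) (hsurj : Function.Surjective (Φ.prod Ψ)) (v : V)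
    (w : W) : IndepSet (Φ ⁻¹' {v}) (Ψ ⁻¹' {w}) μ := by
  have hinter : Φ ⁻¹' {v} ∩ Ψ ⁻¹' {w} = Φ.prod Ψ ⁻¹' {(v, w)} := by
    ext x
    simp
  rw [indepSet_iff_measure_inter_eq_mul (hΦ (measurableSet_singleton v))
    (hΨ (measurableSet_singleton w)) μ,
    ← ENNReal.toReal_eq_toReal_iff' (by finiteness) (by finiteness), ENNReal.toReal_mul, hinter]
  have hΦsurj : Function.Surjective Φ := Prod.fst_surjective.comp hsurj
  have hΨsurj : Function.Surjective Ψ := Prod.snd_surjective.comp hsurj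
  simp only [← measureReal_def, measureReal_preimage_singleton_of_surjective hΦ hΦsurj,
    measureReal_preimage_singleton_of_surjective hΨ hΨsurj,
    measureReal_preimage_singleton_of_surjective (hΦ.prodMk hΨ) hsurj]
  rw [Nat.card_prod, Nat.cast_mul, mul_inv]

end SurjectiveHom

section Digits

variable {q : ℕ}

theorem digitVec_eq_zero_of_lt {k l : ℕ} (hk : k < q ^ l) : digitVec q k l = 0 := by
  rw [digitVec, Nat.div_eq_of_lt hk, Nat.zero_mod, Nat.cast_zero]

theorem digitVec_eq_zero_of_len_lt (hq : 1 < q) {k l : ℕ} (hl : len q k < l) :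
    digitVec q k l = 0 :=
  digitVec_eq_zero_of_lt (Nat.lt_pow_of_log_lt hq hl)

theorem digitVec_len_ne_zero (hq : 1 < q) {k : ℕ} (hk : k ≠ 0) : digitVec q k (len q k) ≠ 0 := by
  have hlt : k / q ^ len q k < q := Nat.div_lt_of_lt_mul (Nat.lt_pow_succ_log_self hq k)
  have hpos : 0 < k / q ^ len q k := Nat.div_pos (Nat.pow_log_le_self q hk) (by positivity)
  rw [digitVec, Nat.mod_eq_of_lt hlt, Ne, ZMod.natCast_eq_zero_iff]
  exact Nat.not_dvd_of_pos_of_lt hpos hlt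

theorem digitVec_injective (hq : 1 < q) : Function.Injective (digitVec q) := fun k k' hdigits => by
  have hmod (l : ℕ) : k % q ^ l = k' % q ^ l := by
    induction l with
    | zero => rw [pow_zero, Nat.mod_one, Nat.mod_one]
    | succ l ih =>
      have hl := congrFun hdigits l
      rw [digitVec, digitVec, ZMod.natCast_eq_natCast_iff', Nat.mod_mod, Nat.mod_mod] at hl
      rw [Nat.mod_pow_succ, Nat.mod_pow_succ, ih, hl]
  have hlt (m : ℕ) (hm : m ≤ k + k') : m < q ^ (k + k') := hm.trans_lt (Nat.lt_pow_self hq)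
  simpa only [Nat.mod_eq_of_lt (hlt k (by lia)), Nat.mod_eq_of_lt (hlt k' (by lia))]
    using hmod (k + k')

theorem digitVec_mul_add_one_zero (hq : 1 < q) (a : ℕ) : digitVec q (q * a + 1) 0 = 1 := by
  rw [digitVec, pow_zero, Nat.div_one, Nat.mul_add_mod, Nat.mod_eq_of_lt hq, Nat.cast_one]

theorem len_mul_add_one (hq : 1 < q) {a : ℕ} (ha : a ≠ 0) :
    len q (q * a + 1) = Nat.log q a + 1 := by
  rw [len, Nat.log_of_one_lt_of_le hq (by nlinarith [Nat.pos_of_ne_zero ha]),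
    Nat.mul_add_div (by lia), Nat.div_eq_of_lt hq, add_zero]

end Digits

section WalshExponent

variable {q s : ℕ}

/-- The exponent of the multivariate Walsh function `wal_k` as a linear functional of the digit
vectors of the coordinates: `wal_k` takes the value `ω_q ^ (walshExponent q k v)`. -/
def walshExponent (q : ℕ) {s : ℕ} (k : Fin s → ℕ) : (Fin s → ℕ → ZMod q) →ₗ[ZMod q] ZMod q :=
  ∑ j, ∑ l ∈ Finset.range (k j + 1), digitVec q (k j) l •
    (LinearMap.proj l : (ℕ → ZMod q) →ₗ[ZMod q] ZMod q) ∘ₗ LinearMap.proj j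

theorem walshExponent_apply (k : Fin s → ℕ) (v : Fin s → ℕ → ZMod q) :
    walshExponent q k v = ∑ j, ∑ l ∈ Finset.range (k j + 1), digitVec q (k j) l * v j l := by
  simp [walshExponent]

theorem walshExponent_single (hq : 1 < q) (k : Fin s → ℕ) (j : Fin s) (l : ℕ) (u : ZMod q) :
    walshExponent q k (Pi.single j (Pi.single l u)) = digitVec q (k j) l * u := by
  rw [walshExponent_apply, Finset.sum_eq_single j (fun i _ hij => by simp [hij]) (by simp)]
  rw [Finset.sum_eq_single l (fun i _ hil => by simp [hil]) fun hl => ?_]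
  · simp
  · have hlen : len q (k j) < l :=
      (Nat.log_le_self q (k j)).trans_lt (Nat.succ_le_iff.1 (by simpa using hl))
    rw [digitVec_eq_zero_of_len_lt hq hlen, zero_mul]

theorem walshExponent_eq_leadingDigit_mul (hq : 1 < q) {k : Fin s → ℕ} {v : Fin s → ℕ → ZMod q}
    {j₀ : Fin s} (hv : ∀ j ≠ j₀, ∀ l ≤ len q (k j), v j l = 0)
    (hv₀ : ∀ l < len q (k j₀), v j₀ l = 0) :
    walshExponent q k v = digitVec q (k j₀) (len q (k j₀)) * v j₀ (len q (k j₀)) := by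
  rw [walshExponent_apply, Finset.sum_eq_single j₀ _ (by simp),
    Finset.sum_eq_single (len q (k j₀)) (fun l _ hl => ?_) fun hlen => ?_]
  · rcases hl.lt_or_gt with hlt | hgt
    · rw [hv₀ l hlt, mul_zero]
    · rw [digitVec_eq_zero_of_len_lt hq hgt, zero_mul]
  · exact absurd (Finset.mem_range_succ_iff.2 (Nat.log_le_self q (k j₀))) hlen
  · refine fun j _ hj => Finset.sum_eq_zero fun l _ => ?_
    rcases le_or_gt l (len q (k j)) with hle | hgt
    · rw [hv j hj l hle, mul_zero]
    · rw [digitVec_eq_zero_of_len_lt hq hgt, zero_mul]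

end WalshExponent

section DualNet

variable {q s : ℕ}

/-- The Walsh exponents of the first `M` columns of the generating matrices. -/
def columnExponents (q : ℕ) {s : ℕ} (k : Fin s → ℕ) (M : ℕ) :
    (Fin s → ℕ → ℕ → ZMod q) →+ (Fin M → ZMod q) where
  toFun C i := walshExponent q k fun j l => C j l i
  map_zero' := funext fun _ => map_zero (walshExponent q k)
  map_add' C D := funext fun i =>
    map_add (walshExponent q k) (fun j l => C j l i) fun j l => D j l i

/-- The event that `k` lies in the dual net of the first `q ^ M` points of the digital sequence. -/
def dualNetEvent (q : ℕ) {s : ℕ} (k : Fin s → ℕ) (M : ℕ) : Set (Fin s → ℕ → ℕ → ZMod q) :=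
  columnExponents q k M ⁻¹' {0}

theorem measurable_columnExponents [NeZero q] (k : Fin s → ℕ) (M : ℕ) :
    Measurable (columnExponents q k M) := by
  refine measurable_pi_iff.2 fun i => ?_
  change Measurable fun C : Fin s → ℕ → ℕ → ZMod q => walshExponent q k fun j l => C j l i
  simp only [walshExponent_apply]
  refine Finset.measurable_fun_sum _ fun j _ => Finset.measurable_fun_sum _ fun l _ => ?_
  exact Measurable.const_mul (by fun_prop) _

theorem measurableSet_dualNetEvent [NeZero q] (k : Fin s → ℕ) (M : ℕ) :
    MeasurableSet (dualNetEvent q k M) :=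
  measurable_columnExponents k M (measurableSet_singleton 0)

theorem walshExponent_matVec_eq_zero (hq : 0 < q) {k : Fin s → ℕ} {M n : ℕ}
    {C : Fin s → ℕ → ℕ → ZMod q} (hC : C ∈ dualNetEvent q k M) (hn : n < q ^ M) :
    walshExponent q k (fun j => matVec (C j) n) = 0 := by
  have hcolumns : (fun j => matVec (C j) n) =
      ∑ i ∈ Finset.range (n + 1), digitVec q n i • fun j l => C j l i := by
    ext j l
    simp [matVec, mul_comm]
  rw [hcolumns, map_sum]
  refine Finset.sum_eq_zero fun i _ => ?_
  rw [map_smul, smul_eq_mul]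
  rcases lt_or_ge i M with hi | hi
  · have hcolumn : walshExponent q k (fun j l => C j l i) = 0 := congrFun hC ⟨i, hi⟩
    rw [hcolumn, mul_zero]
  · rw [digitVec_eq_zero_of_lt (hn.trans_le (Nat.pow_le_pow_right hq hi)), zero_mul]

theorem columnExponents_surjective {k : Fin s → ℕ} (hk : Function.Surjective (walshExponent q k))
    (M : ℕ) : Function.Surjective (columnExponents q k M) := fun u => by
  choose v hv using hk
  refine ⟨fun j l i => if h : i < M then v (u ⟨i, h⟩) j l else 0, funext fun i => ?_⟩
  simpa [columnExponents] using hv (u i)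

theorem columnExponents_prod_surjective {k k' : Fin s → ℕ}
    (hk : Function.Surjective ((walshExponent q k).prod (walshExponent q k'))) (M M' : ℕ) :
    Function.Surjective ((columnExponents q k M).prod (columnExponents q k' M')) := by
  rintro ⟨u, u'⟩
  choose v hv using hk
  let C : Fin s → ℕ → ℕ → ZMod q := fun j l i =>
    v (if h : i < M then u ⟨i, h⟩ else 0, if h : i < M' then u' ⟨i, h⟩ else 0) j l
  refine ⟨C, Prod.ext (funext fun i => ?_) (funext fun i => ?_)⟩
  · exact (congrArg Prod.fst (hv _)).trans (dif_pos i.2)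
  · exact (congrArg Prod.snd (hv _)).trans (dif_pos i.2)

end DualNet

section WalshIndex

variable {q s : ℕ}

/-- The Walsh index with lowest digit `1` and digits `a j` above it in each coordinate.  Distinct
such indices have linearly independent digit vectors. -/
def walshIndex (q : ℕ) {s : ℕ} (a : Fin s → ℕ) : Fin s → ℕ := fun j => q * a j + 1

theorem walshIndex_injective (hq : 0 < q) :
    Function.Injective (walshIndex q : (Fin s → ℕ) → Fin s → ℕ) := fun a a' h => by
  ext j
  have hj : q * a j + 1 = q * a' j + 1 := congrFun h j
  exact Nat.eq_of_mul_eq_mul_left hq (Nat.succ_injective hj)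

theorem walshExponent_walshIndex_surjective (hq : 1 < q) (a : Fin s → ℕ) (j₀ : Fin s) :
    Function.Surjective (walshExponent q (walshIndex q a)) := fun u =>
  ⟨Pi.single j₀ (Pi.single 0 u), by
    rw [walshExponent_single hq, walshIndex, digitVec_mul_add_one_zero hq, one_mul]⟩

theorem walshExponent_walshIndex_prod_surjective [Fact q.Prime] {a a' : Fin s → ℕ} (ha : a ≠ a') :
    Function.Surjective
      ((walshExponent q (walshIndex q a)).prod (walshExponent q (walshIndex q a'))) := by
  have hq : 1 < q := (Fact.out : q.Prime).one_lt
  obtain ⟨j, hj⟩ := Function.ne_iff.1 ((walshIndex_injective hq.le).ne ha)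
  obtain ⟨l, hl⟩ := Function.ne_iff.1 ((digitVec_injective hq).ne hj)
  have hminor := sub_ne_zero.2 hl
  have hexponent (a : Fin s → ℕ) (x y : ZMod q) : walshExponent q (walshIndex q a)
      (Pi.single j (Pi.single 0 x) + Pi.single j (Pi.single l y)) =
        x + digitVec q (walshIndex q a j) l * y := by
    rw [map_add, walshExponent_single hq, walshExponent_single hq, walshIndex,
      digitVec_mul_add_one_zero hq, one_mul]
  rintro ⟨u, u'⟩
  let y := (u - u') / (digitVec q (walshIndex q a j) l - digitVec q (walshIndex q a' j) l)
  refine ⟨Pi.single j (Pi.single 0 (u - digitVec q (walshIndex q a j) l * y)) +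
    Pi.single j (Pi.single l y), Prod.ext ?_ ?_⟩
  · exact (hexponent a _ _).trans (sub_add_cancel _ _)
  · refine (hexponent a' _ _).trans ?_
    simp only [y]
    field_simp
    ring

variable {μ : Measure (Fin s → ℕ → ℕ → ZMod q)}

theorem measureReal_dualNetEvent_walshIndex [NeZero s] (hq : 1 < q)
    (hμ : IsUniformMatrixTupleMeasure μ) (a : Fin s → ℕ) (M : ℕ) :
    μ.real (dualNetEvent q (walshIndex q a) M) = ((q : ℝ) ^ M)⁻¹ := by
  have : NeZero q := ⟨by lia⟩
  have := hμ.1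
  have := hμ.isAddLeftInvariant
  rw [dualNetEvent, measureReal_preimage_singleton_of_surjective (measurable_columnExponents _ M)
    (columnExponents_surjective (walshExponent_walshIndex_surjective hq a 0) M)]
  simp

theorem indepSet_dualNetEvent_walshIndex [Fact q.Prime] (hμ : IsUniformMatrixTupleMeasure μ)
    {a a' : Fin s → ℕ} (ha : a ≠ a') (M M' : ℕ) :
    IndepSet (dualNetEvent q (walshIndex q a) M) (dualNetEvent q (walshIndex q a') M') μ := by
  have := hμ.1
  have := hμ.isAddLeftInvariant
  exact indepSet_preimage_singleton_of_surjective_prod (measurable_columnExponents _ M)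
    (measurable_columnExponents _ M')
    (columnExponents_prod_surjective (walshExponent_walshIndex_prod_surjective ha) M M') 0 0

end WalshIndex

section LocalDiscrepancy

variable {s : ℕ} {y : ℕ → Fin s → ℝ} {N : ℕ} {x x' : Fin s → ℝ}

theorem abs_localDisc_le_card (hx : ∀ j, x j ∈ Set.Icc (0 : ℝ) 1) : |localDisc y x N| ≤ N := by
  have hcard : Nat.card {n : ℕ | n < N ∧ ∀ j, y n j ∈ Set.Ico 0 (x j)} ≤ N := by
    simpa using Nat.card_mono (Set.finite_Iio N) fun n hn => hn.1
  have hvol : ∏ j, x j ≤ 1 := Finset.prod_le_one (fun j _ => (hx j).1) fun j _ => (hx j).2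
  exact abs_sub_le_of_nonneg_of_le (Nat.cast_nonneg _) (Nat.cast_le.2 hcard)
    (mul_nonneg N.cast_nonneg (Finset.prod_nonneg fun j _ => (hx j).1))
    (mul_le_of_le_one_right N.cast_nonneg hvol)

theorem abs_localDisc_le_starDisc (hx : ∀ j, x j ∈ Set.Icc (0 : ℝ) 1) :
    |localDisc y x N| ≤ starDisc y N :=
  le_csSup ⟨N, by rintro _ ⟨x, hx, rfl⟩; exact abs_localDisc_le_card hx⟩ ⟨x, hx, rfl⟩

theorem mul_prod_sub_prod_le_two_mul_starDisc (hx : ∀ j, x j ∈ Set.Icc (0 : ℝ) 1)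
    (hx' : ∀ j, x' j ∈ Set.Icc (0 : ℝ) 1)
    (hpoints : ∀ n < N, (∀ j, y n j ∈ Set.Ico 0 (x' j)) ↔ ∀ j, y n j ∈ Set.Ico 0 (x j)) :
    N * (∏ j, x' j - ∏ j, x j) ≤ 2 * starDisc y N := by
  have hset : {n : ℕ | n < N ∧ ∀ j, y n j ∈ Set.Ico 0 (x' j)} =
      {n : ℕ | n < N ∧ ∀ j, y n j ∈ Set.Ico 0 (x j)} :=
    Set.ext fun n => and_congr_right (hpoints n)
  calc N * (∏ j, x' j - ∏ j, x j) = localDisc y x N - localDisc y x' N := by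
        rw [localDisc, localDisc, hset]
        ring
    _ ≤ |localDisc y x N| + |localDisc y x' N| := (le_abs_self _).trans (abs_sub _ _)
    _ ≤ 2 * starDisc y N := by
        linarith [abs_localDisc_le_starDisc (y := y) (N := N) hx,
          abs_localDisc_le_starDisc (y := y) (N := N) hx']

end LocalDiscrepancy

section LeadingDigits

variable {b R : ℕ} {d : ℕ → Fin b}

theorem two_mul_inv_pow_succ_le (hb : 1 < b) (R : ℕ) :
    2 * ((b : ℝ) ^ (R + 1))⁻¹ ≤ ((b : ℝ) ^ R)⁻¹ := by
  have hb₂ : (2 : ℝ) ≤ b := by exact_mod_cast hb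
  rw [pow_succ, mul_inv, mul_left_comm, ← div_eq_mul_inv 2]
  exact mul_le_of_le_one_right (by positivity) ((div_le_one (by linarith)).2 hb₂)

theorem val_eq_zero_of_ofDigits_lt (hd : Real.ofDigits d < ((b : ℝ) ^ R)⁻¹) {i : ℕ} (hi : i < R) :
    (d i : ℕ) = 0 := by
  by_contra hne
  have hb : (1 : ℝ) ≤ b := Nat.one_le_cast.2 (Fin.pos (d 0))
  have hdigit : (1 : ℝ) ≤ (d i : ℕ) := Nat.one_le_cast.2 (Nat.one_le_iff_ne_zero.2 hne)
  refine hd.not_ge ?_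
  calc ((b : ℝ) ^ R)⁻¹ ≤ ((b : ℝ) ^ (i + 1))⁻¹ := by gcongr; assumption
    _ ≤ Real.ofDigitsTerm d i := le_mul_of_one_le_left (by positivity) hdigit
    _ ≤ Real.ofDigits d :=
        Real.summable_ofDigitsTerm.le_tsum i fun _ _ => Real.ofDigitsTerm_nonneg

theorem val_eq_one_of_lt_ofDigits_of_ofDigits_lt (hb : 1 < b)
    (hlo : ((b : ℝ) ^ (R + 1))⁻¹ < Real.ofDigits d)
    (hhi : Real.ofDigits d < 2 * ((b : ℝ) ^ (R + 1))⁻¹) : (d R : ℕ) = 1 := by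
  have hhead : ∀ i < R, Real.ofDigitsTerm d i = 0 := fun i hi => by
    have hlt := hhi.trans_le (two_mul_inv_pow_succ_le hb R)
    rw [Real.ofDigitsTerm, val_eq_zero_of_ofDigits_lt hlt hi, Nat.cast_zero, zero_mul]
  have hsplit : Real.ofDigits d =
      ((d R : ℕ) + Real.ofDigits fun i => d (i + (R + 1))) * ((b : ℝ) ^ (R + 1))⁻¹ := by
    rw [Real.ofDigits_eq_sum_add_ofDigits d (R + 1), Finset.sum_range_succ,
      Finset.sum_eq_zero fun i hi => hhead i (Finset.mem_range.1 hi), Real.ofDigitsTerm]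
    ring
  have hpow : (0 : ℝ) < ((b : ℝ) ^ (R + 1))⁻¹ := by positivity
  rw [hsplit] at hlo hhi
  have hgt : (0 : ℝ) < (d R : ℕ) := by
    linarith [(lt_mul_iff_one_lt_left hpow).1 hlo, Real.ofDigits_le_one fun i => d (i + (R + 1))]
  have hlt : ((d R : ℕ) : ℝ) < 2 := by
    linarith [(mul_lt_mul_iff_left₀ hpow).1 hhi, Real.ofDigits_nonneg fun i => d (i + (R + 1))]
  exact le_antisymm (Nat.lt_succ_iff.1 (by exact_mod_cast hlt)) (by exact_mod_cast hgt)

end LeadingDigits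

section DigitalSequence

variable {q s : ℕ} {C : Fin s → ℕ → ℕ → ZMod q} {n R : ℕ} {j : Fin s}

theorem digitalSeq_eq_ofDigits [NeZero q] (C : Fin s → ℕ → ℕ → ZMod q) (n : ℕ) (j : Fin s) :
    digitalSeq C n j =
      Real.ofDigits fun i => (⟨(matVec (C j) n i).val, ZMod.val_lt _⟩ : Fin q) :=
  tsum_congr fun _ => div_eq_mul_inv _ _

theorem digitalSeq_nonneg (C : Fin s → ℕ → ℕ → ZMod q) (n : ℕ) (j : Fin s) :
    0 ≤ digitalSeq C n j :=
  tsum_nonneg fun _ => by positivity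

theorem matVec_eq_zero_of_digitalSeq_lt [NeZero q] (hx : digitalSeq C n j < ((q : ℝ) ^ R)⁻¹)
    {i : ℕ} (hi : i < R) : matVec (C j) n i = 0 := by
  rw [digitalSeq_eq_ofDigits] at hx
  exact (ZMod.val_eq_zero _).1 (val_eq_zero_of_ofDigits_lt hx hi)

theorem matVec_eq_one_of_lt_digitalSeq_of_digitalSeq_lt (hq : 1 < q)
    (hlo : ((q : ℝ) ^ (R + 1))⁻¹ < digitalSeq C n j)
    (hhi : digitalSeq C n j < 2 * ((q : ℝ) ^ (R + 1))⁻¹) : matVec (C j) n R = 1 := by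
  have : NeZero q := ⟨by lia⟩
  rw [digitalSeq_eq_ofDigits] at hlo hhi
  exact (ZMod.val_eq_one hq _).1 (val_eq_one_of_lt_ofDigits_of_ofDigits_lt hq hlo hhi)

/-- The upper corner of the elementary box at the origin on which all digits entering the Walsh
function `wal_k` vanish. -/
def dualCorner (q : ℕ) {s : ℕ} (k : Fin s → ℕ) : Fin s → ℝ :=
  fun j => ((q : ℝ) ^ (len q (k j) + 1))⁻¹

variable {k : Fin s → ℕ} {M : ℕ} {j₀ : Fin s}

-- In the open gap the Walsh exponent would be the leading digit of `k j₀`.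
theorem digitalSeq_le_dualCorner_of_mem_dualNetEvent (hq : 1 < q) (hk : k j₀ ≠ 0)
    (hC : C ∈ dualNetEvent q k M) (hn : n < q ^ M)
    (hx : ∀ j ≠ j₀, digitalSeq C n j < dualCorner q k j)
    (hx₀ : digitalSeq C n j₀ < 2 * dualCorner q k j₀) :
    digitalSeq C n j₀ ≤ dualCorner q k j₀ := by
  have : NeZero q := ⟨by lia⟩
  by_contra! hgap
  have hlead : matVec (C j₀) n (len q (k j₀)) = 1 :=
    matVec_eq_one_of_lt_digitalSeq_of_digitalSeq_lt hq hgap hx₀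
  have hzero₀ : ∀ l < len q (k j₀), matVec (C j₀) n l = 0 := fun l =>
    matVec_eq_zero_of_digitalSeq_lt (hx₀.trans_le (two_mul_inv_pow_succ_le hq _))
  have hzero : ∀ j ≠ j₀, ∀ l ≤ len q (k j), matVec (C j) n l = 0 := fun j hj l hl =>
    matVec_eq_zero_of_digitalSeq_lt (hx j hj) (Nat.lt_succ_of_le hl)
  have hexponent := walshExponent_matVec_eq_zero (by lia) hC hn
  rw [walshExponent_eq_leadingDigit_mul hq hzero hzero₀, hlead, mul_one] at hexponent
  exact digitVec_len_ne_zero hq hk hexponent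

/-- The corner `dualCorner q k` with its `j₀`-th coordinate stretched by the factor `t`. -/
def stretchedCorner (q : ℕ) {s : ℕ} (k : Fin s → ℕ) (j₀ : Fin s) (t : ℝ) : Fin s → ℝ :=
  dualCorner q k * Pi.mulSingle j₀ t

theorem stretchedCorner_self (t : ℝ) : stretchedCorner q k j₀ t j₀ = dualCorner q k j₀ * t := by
  simp [stretchedCorner]

theorem stretchedCorner_of_ne (t : ℝ) (hj : j ≠ j₀) :
    stretchedCorner q k j₀ t j = dualCorner q k j := by
  simp [stretchedCorner, hj]

theorem prod_stretchedCorner (t : ℝ) :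
    ∏ j, stretchedCorner q k j₀ t j = (∏ j, dualCorner q k j) * t := by
  simp [stretchedCorner, Finset.prod_mul_distrib]

theorem stretchedCorner_mem_Icc (hq : 1 < q) {t : ℝ} (ht : t ∈ Set.Icc (0 : ℝ) 2) (j : Fin s) :
    stretchedCorner q k j₀ t j ∈ Set.Icc (0 : ℝ) 1 := by
  have hpos : 0 < dualCorner q k j := by
    rw [dualCorner]
    positivity
  have hhalf : 2 * dualCorner q k j ≤ 1 := (two_mul_inv_pow_succ_le hq _).trans
    (inv_le_one_of_one_le₀ (one_le_pow₀ (Nat.one_le_cast.2 hq.le)))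
  rcases eq_or_ne j j₀ with rfl | hj
  · rw [stretchedCorner_self]
    exact ⟨mul_nonneg hpos.le ht.1, by nlinarith [ht.2]⟩
  · rw [stretchedCorner_of_ne t hj]
    exact ⟨hpos.le, by linarith⟩

theorem forall_digitalSeq_mem_Ico_stretchedCorner_iff (t : ℝ) :
    (∀ j, digitalSeq C n j ∈ Set.Ico 0 (stretchedCorner q k j₀ t j)) ↔
      (∀ j ≠ j₀, digitalSeq C n j < dualCorner q k j) ∧
        digitalSeq C n j₀ < dualCorner q k j₀ * t := by
  refine ⟨fun h => ⟨fun j hj => ?_, ?_⟩, fun ⟨hne, heq⟩ j => ⟨digitalSeq_nonneg C n j, ?_⟩⟩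
  · simpa only [stretchedCorner_of_ne t hj] using (h j).2
  · simpa only [stretchedCorner_self] using (h j₀).2
  · rcases eq_or_ne j j₀ with rfl | hj
    · rwa [stretchedCorner_self]
    · rw [stretchedCorner_of_ne t hj]
      exact hne j hj

-- Stretching one side of the box from `3 / 2` to `2` adds volume but no points.
theorem pow_mul_prod_dualCorner_le_four_mul_starDisc (hq : 1 < q) (hk : k j₀ ≠ 0)
    (hC : C ∈ dualNetEvent q k M) :
    (q : ℝ) ^ M * ∏ j, dualCorner q k j ≤ 4 * starDisc (digitalSeq C) (q ^ M) := by
  have hpos : 0 < dualCorner q k j₀ := by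
    rw [dualCorner]
    positivity
  have hpoints : ∀ n < q ^ M,
      (∀ j, digitalSeq C n j ∈ Set.Ico 0 (stretchedCorner q k j₀ 2 j)) ↔
        ∀ j, digitalSeq C n j ∈ Set.Ico 0 (stretchedCorner q k j₀ (3 / 2) j) := fun n hn => by
    rw [forall_digitalSeq_mem_Ico_stretchedCorner_iff,
      forall_digitalSeq_mem_Ico_stretchedCorner_iff]
    refine and_congr_right fun hne => ⟨fun hlt => ?_, fun hlt => by linarith⟩
    have hgap := digitalSeq_le_dualCorner_of_mem_dualNetEvent hq hk hC hn hne (by linarith)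
    linarith
  have hdisc := mul_prod_sub_prod_le_two_mul_starDisc
    (stretchedCorner_mem_Icc hq (by norm_num)) (stretchedCorner_mem_Icc hq (by norm_num)) hpoints
  rw [prod_stretchedCorner, prod_stretchedCorner] at hdisc
  push_cast at hdisc
  linarith

end DigitalSequence

section Resolution

variable {q s : ℕ}

/-- The number of digits entering the Walsh function `wal_k`; for `k` with nonzero coordinates this
is its Niederreiter–Rosenbloom–Tsfasman weight. -/
def nrtWeight (q : ℕ) {s : ℕ} (k : Fin s → ℕ) : ℕ := ∑ j, (len q (k j) + 1)

/-- The order of magnitude of `(log N) ^ s * log (log N)` for `log N` of order `W`. -/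
def growth (s W : ℕ) : ℕ := W ^ s * (Nat.log 2 W + 1)

/-- The least `M` such that `q ^ M` points outnumber the elementary boxes of volume
`∏ j, dualCorner q k j` by more than the factor `growth s (nrtWeight q k)`. -/
def resolution (q : ℕ) {s : ℕ} (k : Fin s → ℕ) : ℕ :=
  nrtWeight q k + (Nat.log q (growth s (nrtWeight q k)) + 1)

theorem prod_dualCorner (k : Fin s → ℕ) :
    ∏ j, dualCorner q k j = ((q : ℝ) ^ nrtWeight q k)⁻¹ := by
  simp only [dualCorner, nrtWeight, Finset.prod_inv_distrib, Finset.prod_pow_eq_pow_sum]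

theorem len_lt_nrtWeight (k : Fin s → ℕ) (j : Fin s) : len q (k j) < nrtWeight q k :=
  Finset.single_le_sum (f := fun j => len q (k j) + 1) (fun _ _ => Nat.zero_le _)
    (Finset.mem_univ j)

theorem growth_mono {W W' : ℕ} (h : W ≤ W') : growth s W ≤ growth s W' := by
  rw [growth, growth]
  gcongr

theorem growth_pos {W : ℕ} (hW : 0 < W) : 0 < growth s W := by
  rw [growth]
  positivity

theorem growth_lt_two_pow {W : ℕ} (hW : 0 < W) : growth s W < 2 ^ ((s + 1) * W) := by
  have hlog : Nat.log 2 W + 1 ≤ W := Nat.log_lt_self 2 hW.ne'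
  calc growth s W ≤ W ^ s * W := Nat.mul_le_mul_left _ hlog
    _ = W ^ (s + 1) := (pow_succ W s).symm
    _ < (2 ^ W) ^ (s + 1) := Nat.pow_lt_pow_left W.lt_two_pow_self (Nat.succ_ne_zero s)
    _ = 2 ^ ((s + 1) * W) := by rw [← pow_mul, mul_comm]

theorem resolution_le (hq : 1 < q) {k : Fin s → ℕ} (hk : 0 < nrtWeight q k) :
    resolution q k ≤ (s + 2) * nrtWeight q k := by
  have hgain : Nat.log q (growth s (nrtWeight q k)) < (s + 1) * nrtWeight q k :=
    Nat.log_lt_of_lt_pow (growth_pos hk).ne'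
      ((growth_lt_two_pow hk).trans_le (Nat.pow_le_pow_left hq _))
  rw [resolution]
  linarith

theorem growth_le_pow_resolution_mul_prod_dualCorner (hq : 1 < q) (k : Fin s → ℕ) :
    (growth s (nrtWeight q k) : ℝ) ≤ (q : ℝ) ^ resolution q k * ∏ j, dualCorner q k j := by
  rw [prod_dualCorner, resolution, pow_add, mul_comm, inv_mul_cancel_left₀ (by positivity)]
  exact_mod_cast (Nat.lt_pow_succ_log_self hq _).le

theorem prod_dualCorner_div_le_inv_pow_resolution (hq : 1 < q) {k : Fin s → ℕ}
    (hk : 0 < nrtWeight q k) :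
    (∏ j, dualCorner q k j) / (q * growth s (nrtWeight q k)) ≤ ((q : ℝ) ^ resolution q k)⁻¹ := by
  have hgain : (q : ℝ) ^ Nat.log q (growth s (nrtWeight q k)) ≤ growth s (nrtWeight q k) := by
    exact_mod_cast Nat.pow_log_le_self q (growth_pos hk).ne'
  rw [prod_dualCorner, resolution, pow_add, mul_inv, div_eq_mul_inv, pow_succ']
  gcongr

theorem log_natCast_le_log_two_add_one {W : ℕ} (hW : 0 < W) :
    Real.log W ≤ Nat.log 2 W + 1 := by
  have hlt : (W : ℝ) ≤ 2 ^ (Nat.log 2 W + 1) := by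
    exact_mod_cast (Nat.lt_pow_succ_log_self one_lt_two W).le
  calc Real.log W ≤ Real.log (2 ^ (Nat.log 2 W + 1)) := Real.log_le_log (Nat.cast_pos.2 hW) hlt
    _ = (Nat.log 2 W + 1) * Real.log 2 := by rw [Real.log_pow, Nat.cast_succ]
    _ ≤ Nat.log 2 W + 1 :=
      mul_le_of_le_one_right (by positivity) (Real.log_two_lt_d9.le.trans (by norm_num))

theorem pow_mul_log_le_mul_growth {A x : ℝ} {W : ℕ} (hA : 0 < A) (hx : 0 < x) (hxW : x ≤ A * W) :
    x ^ s * Real.log x ≤ A ^ s * (A + 1) * growth s W := by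
  have hW : (0 : ℝ) < W := pos_of_mul_pos_right (hx.trans_le hxW) hA.le
  have hlogW := log_natCast_le_log_two_add_one (Nat.cast_pos.1 hW)
  have hlog : Real.log x ≤ (A + 1) * (Nat.log 2 W + 1) := calc
    Real.log x ≤ Real.log (A * W) := Real.log_le_log hx hxW
    _ = Real.log A + Real.log W := Real.log_mul hA.ne' hW.ne'
    _ ≤ A + (Nat.log 2 W + 1) := add_le_add (Real.log_le_self hA.le) hlogW
    _ ≤ (A + 1) * (Nat.log 2 W + 1) := by nlinarith [(Nat.log 2 W).cast_nonneg (α := ℝ)]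
  calc x ^ s * Real.log x ≤ x ^ s * ((A + 1) * (Nat.log 2 W + 1)) := by gcongr
    _ ≤ (A * W) ^ s * ((A + 1) * (Nat.log 2 W + 1)) := by gcongr
    _ = A ^ s * (A + 1) * growth s W := by
      rw [growth]
      push_cast
      ring

theorem exists_pos_forall_mem_dualNetEvent_le_starDisc (hq : 1 < q) (s : ℕ) :
    ∃ c : ℝ, 0 < c ∧ ∀ (k : Fin s → ℕ) (j₀ : Fin s) (C : Fin s → ℕ → ℕ → ZMod q), k j₀ ≠ 0 →
      C ∈ dualNetEvent q k (resolution q k) →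
        c * Real.log (q ^ resolution q k : ℕ) ^ s * Real.log (Real.log (q ^ resolution q k : ℕ)) ≤
          starDisc (digitalSeq C) (q ^ resolution q k) := by
  have hlogq : 0 < Real.log q := Real.log_pos (Nat.one_lt_cast.2 hq)
  let A : ℝ := (s + 2) * Real.log q
  have hA : 0 < A := by positivity
  refine ⟨(4 * (A ^ s * (A + 1)))⁻¹, by positivity, fun k j₀ C hk hC => ?_⟩
  have hW : 0 < nrtWeight q k := (Nat.zero_le _).trans_lt (len_lt_nrtWeight k j₀)
  have hlogN : Real.log (q ^ resolution q k : ℕ) = resolution q k * Real.log q := by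
    rw [Nat.cast_pow, Real.log_pow]
  have hlogN_pos : 0 < Real.log (q ^ resolution q k : ℕ) := by
    rw [hlogN]
    exact mul_pos (Nat.cast_pos.2 (hW.trans_le (Nat.le_add_right _ _))) hlogq
  have hlogN_le : Real.log (q ^ resolution q k : ℕ) ≤ A * nrtWeight q k := by
    rw [hlogN, mul_right_comm]
    gcongr
    exact_mod_cast resolution_le hq hW
  have hgrowth := (growth_le_pow_resolution_mul_prod_dualCorner hq k).trans
    (pow_mul_prod_dualCorner_le_four_mul_starDisc hq hk hC)
  rw [mul_assoc, inv_mul_le_iff₀ (by positivity)]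
  calc Real.log (q ^ resolution q k : ℕ) ^ s * Real.log (Real.log (q ^ resolution q k : ℕ))
      ≤ A ^ s * (A + 1) * growth s (nrtWeight q k) :=
        pow_mul_log_le_mul_growth hA hlogN_pos hlogN_le
    _ ≤ A ^ s * (A + 1) * (4 * starDisc (digitalSeq C) (q ^ resolution q k)) := by gcongr
    _ = 4 * (A ^ s * (A + 1)) * starDisc (digitalSeq C) (q ^ resolution q k) := by ring

theorem tendsto_pow_resolution_walshIndex (hq : 1 < q) :
    Tendsto (fun a : Fin s → ℕ => q ^ resolution q (walshIndex q a)) cofinite atTop := by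
  refine tendsto_atTop.2 fun m => (Set.finite_Iic fun _ => m).subset fun a ha j => ?_
  have hm : q ^ resolution q (walshIndex q a) < m := not_le.1 ha
  have hlt : a j < q ^ resolution q (walshIndex q a) := calc
    a j ≤ walshIndex q a j := (Nat.le_mul_of_pos_left _ (by lia)).trans (Nat.le_succ _)
    _ < q ^ (len q (walshIndex q a j) + 1) := Nat.lt_pow_succ_log_self hq _
    _ ≤ q ^ resolution q (walshIndex q a) := Nat.pow_le_pow_right (by lia)
      ((len_lt_nrtWeight _ j).trans_le (Nat.le_add_right _ _))
  exact hlt.le.trans hm.le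

end Resolution

section Divergence

theorem summable_sum_of_pairwise_disjoint {ι κ : Type*} {f : ι → ℝ} (hf : 0 ≤ f)
    (hsum : Summable f) {t : κ → Finset ι} (ht : Pairwise (Function.onFun Disjoint t)) :
    Summable fun i => ∑ a ∈ t i, f a := by
  classical
  refine summable_of_sum_le (c := ∑' a, f a) (fun i => Finset.sum_nonneg fun a _ => hf a)
    fun u => ?_
  rw [← Finset.sum_biUnion (ht.set_pairwise _)]
  exact hsum.sum_le_tsum _ fun a _ => hf a

theorem not_summable_div_add_one {κ : ℝ} (hκ : κ ≠ 0) : ¬ Summable fun i : ℕ => κ / (i + 1) := by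
  intro h
  refine Real.not_summable_one_div_natCast ((summable_nat_add_iff 1).1 ?_)
  simpa [div_eq_mul_inv, summable_mul_left_iff hκ] using h

variable {q s : ℕ}

theorem sum_Ico_pow_inv_pow_log (hq : 1 < q) (B n : ℕ) :
    ∑ a ∈ Finset.Ico (q ^ B) (q ^ (B + n)), ((q : ℝ) ^ (Nat.log q a + 2))⁻¹ =
      n * ((q - 1) / q ^ 2) := by
  induction n with
  | zero => simp
  | succ n ih =>
    rw [← add_assoc]
    have hpow : q ^ (B + n) ≤ q ^ (B + n + 1) := Nat.pow_le_pow_right hq.le (Nat.le_succ _)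
    have hblock : ∀ a ∈ Finset.Ico (q ^ (B + n)) (q ^ (B + n + 1)),
        ((q : ℝ) ^ (Nat.log q a + 2))⁻¹ = ((q : ℝ) ^ (B + n + 2))⁻¹ := fun a ha => by
      rw [Nat.log_eq_of_pow_le_of_lt_pow (Finset.mem_Ico.1 ha).1 (Finset.mem_Ico.1 ha).2]
    rw [← Finset.sum_Ico_consecutive _ (Nat.pow_le_pow_right hq.le (Nat.le_add_right B n)) hpow, ih,
      Finset.sum_congr rfl hblock, Finset.sum_const, Nat.card_Ico, nsmul_eq_mul, Nat.cast_sub hpow]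
    push_cast
    field_simp
    ring

/-- The indices `a` with `2 ^ i ≤ log_q (a j) < 2 ^ (i + 1)` for all `j`. -/
def dyadicBox (q s i : ℕ) : Finset (Fin s → ℕ) :=
  Fintype.piFinset fun _ => Finset.Ico (q ^ 2 ^ i) (q ^ 2 ^ (i + 1))

variable {i : ℕ} {a : Fin s → ℕ}

theorem log_mem_Ico_of_mem_dyadicBox (hq : 1 < q) (ha : a ∈ dyadicBox q s i) (j : Fin s) :
    Nat.log q (a j) ∈ Set.Ico (2 ^ i) (2 ^ (i + 1)) := by
  obtain ⟨hlo, hhi⟩ := Finset.mem_Ico.1 (Fintype.mem_piFinset.1 ha j)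
  have hpos : 0 < a j := (Nat.pow_pos hq.le).trans_le hlo
  exact ⟨Nat.le_log_of_pow_le hq hlo, Nat.log_lt_of_lt_pow hpos.ne' hhi⟩

theorem pairwise_disjoint_dyadicBox (hq : 1 < q) [NeZero s] :
    Pairwise (Function.onFun Disjoint (dyadicBox q s)) := fun i i' hii' =>
  Finset.disjoint_left.2 fun a ha ha' => hii' <| by
    have hi := log_mem_Ico_of_mem_dyadicBox hq ha 0
    have hi' := log_mem_Ico_of_mem_dyadicBox hq ha' 0
    rw [← Nat.log_eq_of_pow_le_of_lt_pow hi.1 hi.2, Nat.log_eq_of_pow_le_of_lt_pow hi'.1 hi'.2]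

theorem len_walshIndex_of_mem_dyadicBox (hq : 1 < q) (ha : a ∈ dyadicBox q s i) (j : Fin s) :
    len q (walshIndex q a j) = Nat.log q (a j) + 1 := by
  refine len_mul_add_one hq fun hzero => ?_
  have hlog := (log_mem_Ico_of_mem_dyadicBox hq ha j).1
  rw [hzero, Nat.log_zero_right] at hlog
  exact hlog.not_gt (by positivity)

theorem nrtWeight_walshIndex_le_of_mem_dyadicBox (hq : 1 < q) (ha : a ∈ dyadicBox q s i) :
    nrtWeight q (walshIndex q a) ≤ s * 2 ^ (i + 2) := by
  refine (Finset.sum_le_card_nsmul _ _ (2 ^ (i + 2)) fun j _ => ?_).trans_eq (by simp)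
  have hlog := (log_mem_Ico_of_mem_dyadicBox hq ha j).2
  have hone : 1 ≤ 2 ^ i := Nat.one_le_two_pow
  rw [len_walshIndex_of_mem_dyadicBox hq ha]
  lia

theorem growth_mul_two_pow_le (s i : ℕ) :
    growth s (s * 2 ^ (i + 2)) ≤ (4 * s) ^ s * (s + 3) * ((2 ^ i) ^ s * (i + 1)) := by
  have hlog : Nat.log 2 (s * 2 ^ (i + 2)) ≤ s + (i + 2) := calc
    Nat.log 2 (s * 2 ^ (i + 2)) ≤ Nat.log 2 (2 ^ s * 2 ^ (i + 2)) :=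
      Nat.log_mono_right (Nat.mul_le_mul_right _ s.lt_two_pow_self.le)
    _ = s + (i + 2) := by rw [← pow_add, Nat.log_pow one_lt_two]
  calc growth s (s * 2 ^ (i + 2)) ≤ (s * 2 ^ (i + 2)) ^ s * ((s + 3) * (i + 1)) := by
        rw [growth]
        gcongr
        nlinarith
    _ = (4 * s) ^ s * (s + 3) * ((2 ^ i) ^ s * (i + 1)) := by ring

theorem sum_dyadicBox_prod_dualCorner (hq : 1 < q) (i : ℕ) :
    ∑ a ∈ dyadicBox q s i, ∏ j, dualCorner q (walshIndex q a) j =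
      (2 ^ i) ^ s * ((q - 1) / q ^ 2 : ℝ) ^ s := by
  calc ∑ a ∈ dyadicBox q s i, ∏ j, dualCorner q (walshIndex q a) j
      = ∑ a ∈ dyadicBox q s i, ∏ j, ((q : ℝ) ^ (Nat.log q (a j) + 2))⁻¹ :=
        Finset.sum_congr rfl fun a ha => Finset.prod_congr rfl fun j _ => by
          rw [dualCorner, len_walshIndex_of_mem_dyadicBox hq ha]
    _ = ∏ _j : Fin s, ∑ a ∈ Finset.Ico (q ^ 2 ^ i) (q ^ 2 ^ (i + 1)),
          ((q : ℝ) ^ (Nat.log q a + 2))⁻¹ :=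
        (Finset.prod_univ_sum (fun _ => Finset.Ico (q ^ 2 ^ i) (q ^ 2 ^ (i + 1)))
          fun _ a => ((q : ℝ) ^ (Nat.log q a + 2))⁻¹).symm
    _ = (2 ^ i) ^ s * ((q - 1) / q ^ 2 : ℝ) ^ s := by
        rw [pow_succ 2 i, mul_two, sum_Ico_pow_inv_pow_log hq, Finset.prod_const, Finset.card_fin,
          mul_pow]
        push_cast
        rfl

theorem exists_pos_forall_div_le_sum_dyadicBox (hq : 1 < q) [NeZero s] :
    ∃ κ : ℝ, 0 < κ ∧ ∀ i : ℕ, κ / (i + 1) ≤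
      ∑ a ∈ dyadicBox q s i, ((q : ℝ) ^ resolution q (walshIndex q a))⁻¹ := by
  have hq₁ : (0 : ℝ) < q - 1 := sub_pos.2 (Nat.one_lt_cast.2 hq)
  have hs : 0 < s := NeZero.pos s
  let K : ℝ := (4 * s) ^ s * (s + 3)
  refine ⟨((q - 1) / q ^ 2) ^ s / (q * K), by positivity, fun i => ?_⟩
  have hgrowth : (growth s (s * 2 ^ (i + 2)) : ℝ) ≤ K * ((2 ^ i) ^ s * (i + 1)) := by
    simp only [K]
    exact_mod_cast growth_mul_two_pow_le s i
  have hgrowth_pos : (0 : ℝ) < growth s (s * 2 ^ (i + 2)) :=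
    Nat.cast_pos.2 (growth_pos (by positivity))
  calc ((q - 1) / q ^ 2 : ℝ) ^ s / (q * K) / (i + 1)
      = (2 ^ i) ^ s * ((q - 1) / q ^ 2 : ℝ) ^ s / (q * (K * ((2 ^ i) ^ s * (i + 1)))) := by
        field_simp
    _ ≤ (2 ^ i) ^ s * ((q - 1) / q ^ 2 : ℝ) ^ s / (q * growth s (s * 2 ^ (i + 2))) := by gcongr
    _ = ∑ a ∈ dyadicBox q s i,
          (∏ j, dualCorner q (walshIndex q a) j) / (q * growth s (s * 2 ^ (i + 2))) := by
        rw [← sum_dyadicBox_prod_dualCorner hq, Finset.sum_div]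
    _ ≤ ∑ a ∈ dyadicBox q s i, ((q : ℝ) ^ resolution q (walshIndex q a))⁻¹ :=
        Finset.sum_le_sum fun a ha => by
          have hW : 0 < nrtWeight q (walshIndex q a) :=
            (Nat.zero_le _).trans_lt (len_lt_nrtWeight _ 0)
          refine le_trans ?_ (prod_dualCorner_div_le_inv_pow_resolution hq hW)
          have hWpos : (0 : ℝ) < growth s (nrtWeight q (walshIndex q a)) :=
            Nat.cast_pos.2 (growth_pos hW)
          have hle := growth_mono (s := s) (nrtWeight_walshIndex_le_of_mem_dyadicBox hq ha)
          rw [prod_dualCorner]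
          gcongr

theorem not_summable_inv_pow_resolution_walshIndex (hq : 1 < q) [NeZero s] :
    ¬ Summable fun a : Fin s → ℕ => ((q : ℝ) ^ resolution q (walshIndex q a))⁻¹ := fun hsum => by
  obtain ⟨κ, hκ, hbox⟩ := exists_pos_forall_div_le_sum_dyadicBox (s := s) hq
  exact not_summable_div_add_one hκ.ne' <| .of_nonneg_of_le (fun i => by positivity) hbox <|
    summable_sum_of_pairwise_disjoint (fun a => by positivity) hsum (pairwise_disjoint_dyadicBox hq)

end Divergence

/-- **Theorem 2 (Larcher–Pillichshammer).**  For `μ_s`-almost all `s`-tuples of generating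
matrices, the star discrepancy of the associated digital sequence over `ZMod q` satisfies
`D*_N ≥ c(q,s) (log N)^s log log N` for infinitely many `N`. -/
theorem metrical_lower_bound_star_discrepancy_digital_sequences
    (q s : ℕ) (hq : q.Prime) (hs : 1 ≤ s)
    (μs : Measure (Fin s → ℕ → ℕ → ZMod q)) (hμs : IsUniformMatrixTupleMeasure μs) :
    ∃ c : ℝ, 0 < c ∧ ∀ᵐ C ∂μs,
      {N : ℕ | c * Real.log N ^ s * Real.log (Real.log N)
          ≤ starDisc (digitalSeq C) N}.Infinite := by
  have : Fact q.Prime := ⟨hq⟩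
  have : NeZero s := ⟨by lia⟩
  have := hμs.1
  obtain ⟨c, hc, hstarDisc⟩ := exists_pos_forall_mem_dualNetEvent_le_starDisc hq.one_lt s
  have hinfinitely : ∀ᵐ C ∂μs, ∃ᶠ a in cofinite,
      C ∈ dualNetEvent q (walshIndex q a) (resolution q (walshIndex q a)) :=
    ae_frequently_mem_of_pairwise_indepSet (fun a => measurableSet_dualNetEvent _ _)
      (fun a a' ha => indepSet_dualNetEvent_walshIndex hμs ha _ _) <| by
        simpa only [measureReal_dualNetEvent_walshIndex hq.one_lt hμs] using
          not_summable_inv_pow_resolution_walshIndex hq.one_lt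
  refine ⟨c, hc, hinfinitely.mono fun C hC => ?_⟩
  rw [← frequently_cofinite_iff_infinite, Nat.cofinite_eq_atTop]
  exact (tendsto_pow_resolution_walshIndex hq.one_lt).frequently <| hC.mono fun a ha =>
    hstarDisc _ 0 C (Nat.succ_ne_zero _) ha

end
end

section
/- Let q be a prime number, i ∈ ℕ₀ and k ∈ ℕ₀ with digit vector k⃗. Then ∫_{(ZMod q)^{ℕ×ℕ}} wal_i(Cᵀ k⃗) dμ(C) = 1 if i = 0 or k = 0, and = 0 otherwise. -/
open MeasureTheory Filter
open scoped ENNReal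

noncomputable section

/-! The measure `μ` is determined by its values on cylinder sets, and these are unchanged by a
translation `C ↦ E + C`; hence `μ` is translation invariant, and every nontrivial additive
character of the group of matrices has integral `0`. Now `C ↦ wal_i(Cᵀk⃗)` is an additive character.
If `i` and `k` are nonzero, with leading digits `i_s` and `κ_r`, it takes the value
`ω_q ^ (i_s κ_r)` at the matrix whose only nonzero entry is a `1` in row `r` and column `s`.
This value differs from `1` because `ZMod q` has no zero divisors.
-/

theorem integral_addChar_eq_zero {G 𝕜 : Type*} [AddGroup G] [MeasurableSpace G] [MeasurableAdd G]
    [RCLike 𝕜] (μ : Measure G) [μ.IsAddLeftInvariant] {χ : AddChar G 𝕜} (hχ : χ ≠ 0) :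
    ∫ x, χ x ∂μ = 0 := by
  obtain ⟨g, hg⟩ := AddChar.ne_zero_iff.mp hχ
  have h_invariant : χ g * ∫ x, χ x ∂μ = ∫ x, χ x ∂μ := by
    rw [← integral_const_mul, ← integral_add_left_eq_self χ g]
    simp only [AddChar.map_add_eq_mul]
  by_contra h_ne
  exact hg ((mul_eq_right₀ h_ne).mp h_invariant)

section Cylinders

variable {ι κ α : Type*}

/-- The cylinder set of matrices whose entries at the positions in `F` are prescribed by `g`.
Only the values of the total function `g` on `F` matter. -/
def matrixCylinder (F : Finset (ι × κ)) (g : ι × κ → α) : Set (ι → κ → α) :=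
  {C | ∀ p ∈ F, C p.1 p.2 = g p}

variable (ι κ α) in
/-- The collection of all cylinder sets of matrices, the π-system on which measures on the space
of matrices are compared. -/
def matrixCylinders : Set (Set (ι → κ → α)) :=
  {S | ∃ F g, matrixCylinder F g = S}

theorem isPiSystem_matrixCylinders : IsPiSystem (matrixCylinders ι κ α) := by
  classical
  rintro _ ⟨F₁, g₁, rfl⟩ _ ⟨F₂, g₂, rfl⟩ ⟨C, hC₁, hC₂⟩
  -- Any common element `C` can serve as the prescription on `F₁ ∪ F₂`.
  refine ⟨F₁ ∪ F₂, fun p ↦ C p.1 p.2, Set.ext fun D ↦ ?_⟩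
  simp only [matrixCylinder, Set.mem_inter_iff, Set.mem_ofPred_eq, Finset.mem_union, or_imp,
    forall_and]
  exact and_congr (forall₂_congr fun p hp ↦ by rw [hC₁ p hp])
    (forall₂_congr fun p hp ↦ by rw [hC₂ p hp])

variable [MeasurableSpace α] [MeasurableSingletonClass α]

theorem measurableSet_matrixCylinder (F : Finset (ι × κ)) (g : ι × κ → α) :
    MeasurableSet (matrixCylinder F g) := by
  simp only [matrixCylinder, Set.ofPred_forall]
  refine F.measurableSet_biInter fun p _ ↦ ?_
  have h_entry : Measurable fun C : ι → κ → α ↦ C p.1 p.2 := by fun_prop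
  exact h_entry (measurableSet_singleton (g p))

theorem generateFrom_matrixCylinders [Countable α] :
    MeasurableSpace.generateFrom (matrixCylinders ι κ α) = MeasurableSpace.pi := by
  refine le_antisymm (MeasurableSpace.generateFrom_le ?_) ?_
  · rintro _ ⟨F, g, rfl⟩
    exact measurableSet_matrixCylinder F g
  · let _ := MeasurableSpace.generateFrom (matrixCylinders ι κ α)
    have h_id : Measurable[_, MeasurableSpace.pi] (id : (ι → κ → α) → ι → κ → α) := by
      refine measurable_pi_iff.mpr fun i ↦ measurable_pi_iff.mpr fun j ↦ ?_
      refine measurable_to_countable' fun a ↦ MeasurableSpace.measurableSet_generateFrom ?_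
      exact ⟨{(i, j)}, fun _ ↦ a, by ext C; simp [matrixCylinder]⟩
    exact fun S hS ↦ h_id hS

end Cylinders

namespace IsUniformMatrixMeasure

variable {q : ℕ} {μ ν : Measure (ℕ → ℕ → ZMod q)}

theorem measure_matrixCylinder (hμ : IsUniformMatrixMeasure μ) (F : Finset (ℕ × ℕ))
    (g : ℕ × ℕ → ZMod q) : μ (matrixCylinder F g) = (q : ℝ≥0∞)⁻¹ ^ F.card :=
  hμ.2 F g

theorem unique [NeZero q] (hμ : IsUniformMatrixMeasure μ) (hν : IsUniformMatrixMeasure ν) :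
    μ = ν := by
  have := hμ.1
  have := hν.1
  refine ext_of_generate_finite _ generateFrom_matrixCylinders.symm isPiSystem_matrixCylinders ?_
    (by rw [measure_univ, measure_univ])
  rintro _ ⟨F, g, rfl⟩
  rw [hμ.measure_matrixCylinder, hν.measure_matrixCylinder]

theorem map_add_left (hμ : IsUniformMatrixMeasure μ) (E : ℕ → ℕ → ZMod q) :
    IsUniformMatrixMeasure (μ.map (E + ·)) := by
  have := hμ.1
  have h_meas : Measurable (E + ·) := measurable_const_add E
  refine ⟨Measure.isProbabilityMeasure_map h_meas.aemeasurable, fun F g ↦ ?_⟩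
  have h_preimage : (E + ·) ⁻¹' matrixCylinder F g =
      matrixCylinder F fun p ↦ -E p.1 p.2 + g p := by
    ext C
    simp only [matrixCylinder, Set.mem_preimage, Set.mem_ofPred_eq, Pi.add_apply,
      eq_neg_add_iff_add_eq]
  calc μ.map (E + ·) (matrixCylinder F g)
      = μ (matrixCylinder F fun p ↦ -E p.1 p.2 + g p) := by
        rw [Measure.map_apply h_meas (measurableSet_matrixCylinder F g), h_preimage]
    _ = (q : ℝ≥0∞)⁻¹ ^ F.card := hμ.measure_matrixCylinder _ _

theorem isAddLeftInvariant [NeZero q] (hμ : IsUniformMatrixMeasure μ) : μ.IsAddLeftInvariant :=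
  ⟨fun E ↦ (hμ.map_add_left E).unique hμ⟩

end IsUniformMatrixMeasure

theorem digitVec_zero (q : ℕ) : digitVec q 0 = 0 := by
  ext n
  simp [digitVec]

theorem digitVec_log_ne_zero {q k : ℕ} (hq : 1 < q) (hk : k ≠ 0) :
    digitVec q k (Nat.log q k) ≠ 0 := by
  have h_pos : 0 < k / q ^ Nat.log q k :=
    Nat.div_pos (Nat.pow_log_le_self q hk) (pow_pos (by lia) _)
  have h_lt : k / q ^ Nat.log q k < q :=
    Nat.div_lt_of_lt_mul (Nat.lt_pow_succ_log_self hq k)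
  rw [digitVec, Nat.mod_eq_of_lt h_lt, Ne, ZMod.natCast_eq_zero_iff]
  exact Nat.not_dvd_of_pos_of_lt h_pos h_lt

section Characters

variable {q : ℕ}

theorem wal_zero_left (v : ℕ → ZMod q) : wal q 0 v = 1 := by
  simp [wal, digitVec_zero]

theorem wal_zero_right (j : ℕ) : wal q j 0 = 1 := by
  simp [wal]

theorem matVec_zero_right (C : ℕ → ℕ → ZMod q) : matVec C 0 = 0 := by
  ext n
  simp [matVec, digitVec_zero]

theorem matVec_transp_single {k r : ℕ} (hr : r ≤ k) (v : ℕ → ZMod q) :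
    matVec (transp (Pi.single r v)) k = digitVec q k r • v := by
  ext n
  have h_entry (j : ℕ) : (Pi.single r v : ℕ → ℕ → ZMod q) j n = if j = r then v n else 0 := by
    simp only [Pi.single_apply]
    split_ifs <;> rfl
  simp [matVec, transp, h_entry, hr, mul_comm]

/-- The group homomorphism `C ↦ Cᵀk⃗` from matrices to vectors. -/
def transpDigitHom (q k : ℕ) : (ℕ → ℕ → ZMod q) →+ (ℕ → ZMod q) where
  toFun C := matVec (transp C) k
  map_zero' := by
    ext n
    simp [matVec, transp]
  map_add' C D := by
    ext n
    simp [matVec, transp, add_mul, Finset.sum_add_distrib]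

variable [NeZero q]

theorem omega_pow_val (x : ZMod q) : omega q ^ x.val = ZMod.stdAddChar x := by
  rw [ZMod.stdAddChar_apply, ZMod.toCircle_apply, omega, ← Complex.exp_nat_mul]
  ring_nf

theorem wal_eq_stdAddChar (j : ℕ) (v : ℕ → ZMod q) :
    wal q j v = ZMod.stdAddChar (∑ n ∈ Finset.range (j + 1), digitVec q j n * v n) :=
  omega_pow_val _

theorem wal_single {j s : ℕ} (hs : s ≤ j) (x : ZMod q) :
    wal q j (Pi.single s x) = ZMod.stdAddChar (digitVec q j s * x) := by
  simp [wal_eq_stdAddChar, Pi.single_apply, hs]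

variable (q) in
/-- The Walsh function `wal_j` on digit vectors, as an additive character of `(ZMod q)^ℕ`. -/
def walAddChar (j : ℕ) : AddChar (ℕ → ZMod q) ℂ where
  toFun := wal q j
  map_zero_eq_one' := wal_zero_right j
  map_add_eq_mul' v w := by
    simp only [wal_eq_stdAddChar, Pi.add_apply, mul_add, Finset.sum_add_distrib,
      AddChar.map_add_eq_mul]

end Characters

theorem walAddChar_comp_transpDigitHom_ne_zero {q : ℕ} [Fact q.Prime] {i k : ℕ} (hi : i ≠ 0)
    (hk : k ≠ 0) : (walAddChar q i).compAddMonoidHom (transpDigitHom q k) ≠ 0 := by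
  have hq : 1 < q := (Fact.out : q.Prime).one_lt
  set s := Nat.log q i
  set r := Nat.log q k
  refine AddChar.ne_zero_iff.mpr ⟨Pi.single r (Pi.single s 1), ?_⟩
  have h_value : wal q i (matVec (transp (Pi.single r (Pi.single s 1))) k) =
      ZMod.stdAddChar (digitVec q i s * digitVec q k r) := by
    rw [matVec_transp_single (Nat.log_le_self q k), ← Pi.single_smul, smul_eq_mul, mul_one,
      wal_single (Nat.log_le_self q i)]
  have h_digits : digitVec q i s * digitVec q k r ≠ 0 :=
    mul_ne_zero (digitVec_log_ne_zero hq hi) (digitVec_log_ne_zero hq hk)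
  change wal q i (matVec (transp (Pi.single r (Pi.single s 1))) k) ≠ 1
  rwa [h_value, ← AddChar.map_zero_eq_one (ZMod.stdAddChar (N := q)),
    ZMod.injective_stdAddChar.ne_iff]

/-- **Lemma 1.3.**  `∫ wal_i(Cᵀk⃗) dμ(C) = 1` if `i = 0` or `k = 0`, and `= 0` otherwise. -/
theorem integral_wal_transpose_digitVec (q : ℕ) (hq : q.Prime) (i k : ℕ)
    (μ : Measure (ℕ → ℕ → ZMod q)) (hμ : IsUniformMatrixMeasure μ) :
    ∫ C, wal q i (matVec (transp C) k) ∂μ = if i = 0 ∨ k = 0 then 1 else 0 := by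
  have : Fact q.Prime := ⟨hq⟩
  have := hμ.1
  split_ifs with h
  · have h_one (C : ℕ → ℕ → ZMod q) : wal q i (matVec (transp C) k) = 1 := by
      rcases h with rfl | rfl
      · exact wal_zero_left _
      · rw [matVec_zero_right, wal_zero_right]
    simp [h_one]
  · obtain ⟨hi, hk⟩ := not_or.mp h
    have := hμ.isAddLeftInvariant
    exact integral_addChar_eq_zero μ (walAddChar_comp_transpDigitHom_ne_zero hi hk)

end
end

section
/- Let q be a prime number, s ∈ ℕ, and let S(C₁,…,C_s) = (x_n)_{n≥0} be a digital sequence over ZMod q with generating matrices C₁,…,C_s. Let m ∈ ℕ, let N ∈ ℕ with N < q^m and q-adic expansion N = N₀ + N₁q + ⋯ + N_{m−1}q^{m−1}, let k₁,…,k_s ∈ {0,…,q^m−1}, not all zero, and set b⃗ = (b₀,b₁,b₂,…)ᵀ = Σ_{j=1}^s C_jᵀ k⃗_j ∈ (ZMod q)^ℕ. Then Σ_{n=0}^{N−1} Π_{j=1}^s wal_{k_j}(C_j n⃗) = G(N, b⃗), where, with w the least index such that b_w ≠ 0: G(N, b⃗) = ω_q^{b_{w+1}N_{w+1} + ⋯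 + b_{m−1}N_{m−1}} · q^w · ( (ω_q^{b_w N_w} − 1)/(ω_q^{b_w} − 1) + ω_q^{b_w N_w}·{N/q^w} ) if w < m, and G(N, b⃗) = N if w ≥ m or b⃗ = 0⃗ (here {·} denotes the fractional part). -/
open MeasureTheory Filter
open scoped ENNReal

noncomputable section

open Classical in
/-- `G(N, b⃗)`, where `b⃗ = (b₀, b₁, …)` and `w` is the least index with `b_w ≠ 0`:
`G(N,b⃗) = ω_q^{b_{w+1}N_{w+1}+⋯+b_{m−1}N_{m−1}} q^w ((ω_q^{b_w N_w}−1)/(ω_q^{b_w}−1)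
+ ω_q^{b_w N_w} {N/q^w})` if `w < m`, and `G(N,b⃗) = N` if `w ≥ m` or `b⃗ = 0⃗`. -/
def Gfun (q m N : ℕ) (b : ℕ → ZMod q) : ℂ :=
  if ∀ i < m, b i = 0 then (N : ℂ)
  else
    omega q ^ (∑ i ∈ Finset.Ico (sInf {i | b i ≠ 0} + 1) m, b i * digitVec q N i).val *
      (q : ℂ) ^ sInf {i | b i ≠ 0} *
      ((omega q ^ (b (sInf {i | b i ≠ 0}) * digitVec q N (sInf {i | b i ≠ 0})).val - 1) /
          (omega q ^ (b (sInf {i | b i ≠ 0})).val - 1)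
        + omega q ^ (b (sInf {i | b i ≠ 0}) * digitVec q N (sInf {i | b i ≠ 0})).val *
          ((Int.fract ((N : ℝ) / (q : ℝ) ^ sInf {i | b i ≠ 0}) : ℝ) : ℂ))

/-! The matrices can be moved from the points to the frequencies: since `k⃗ᵀ (C n⃗) = (Cᵀ k⃗)ᵀ n⃗`,
the summand is `ψ (b⃗ᵀ n⃗)` for the standard additive character `ψ x = ω_q ^ x` of `ZMod q`. Because
`b⃗` starts at index `w`, this depends only on `t = ⌊n / q ^ w⌋`, so the sum consists of constant
blocks of length `q ^ w` and an incomplete block of length `N mod q ^ w = q ^ w * {N / q ^ w}`.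
As a function of `t` it is `z ^ t`, `z = ψ (b w)`, times a factor depending only on `⌊t / q⌋`. Full
periods of `z ^ t` cancel, which leaves a single incomplete geometric sum. -/

section RangeSums

theorem sum_range_comp_div {M : Type*} [AddCommMonoid M] (h : ℕ → M) (Q N : ℕ) :
    ∑ n ∈ Finset.range N, h (n / Q)
      = Q • ∑ t ∈ Finset.range (N / Q), h t + (N % Q) • h (N / Q) := by
  induction N with
  | zero => simp
  | succ N ih =>
    have hN := Nat.div_add_mod N Q
    have hN' := Nat.div_add_mod (N + 1) Q
    rw [Finset.sum_range_succ, ih, add_assoc, ← succ_nsmul]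
    by_cases hQ : Q ∣ N + 1
    · have hmod : N % Q + 1 = Q := by
        rw [Nat.succ_div_of_dvd hQ, Nat.mod_eq_zero_of_dvd hQ, mul_add] at hN'
        omega
      rw [hmod, Nat.succ_div_of_dvd hQ, Nat.mod_eq_zero_of_dvd hQ, Finset.sum_range_succ,
        zero_nsmul, add_zero, nsmul_add]
    · have hmod : (N + 1) % Q = N % Q + 1 := by
        rw [Nat.succ_div_of_not_dvd hQ] at hN'
        omega
      rw [hmod, Nat.succ_div_of_not_dvd hQ]

theorem sum_range_comp_div_mul_pow {K : Type*} [DivisionRing K] {z : K} {q : ℕ} (hzq : z ^ q = 1)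
    (hz : z ≠ 1) (g : ℕ → K) (T : ℕ) :
    ∑ t ∈ Finset.range T, g (t / q) * z ^ t = g (T / q) * ((z ^ T - 1) / (z - 1)) := by
  induction T with
  | zero => simp
  | succ T ih =>
    rw [Finset.sum_range_succ, ih, ← mul_add, ← geom_sum_eq hz, ← geom_sum_eq hz,
      ← Finset.sum_range_succ]
    by_cases hq : q ∣ T + 1
    · have hperiod : ∑ i ∈ Finset.range (T + 1), z ^ i = 0 := by
        obtain ⟨c, hc⟩ := hq
        rw [geom_sum_eq hz, hc, pow_mul, hzq, one_pow, sub_self, zero_div]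
      rw [hperiod, mul_zero, mul_zero]
    · rw [Nat.succ_div_of_not_dvd hq]

end RangeSums

theorem natCast_mul_fract_div {k : Type*} [Field k] [LinearOrder k] [IsStrictOrderedRing k]
    [FloorRing k] (a b : ℕ) [NeZero b] : (b : k) * Int.fract ((a : k) / b) = (a % b : ℕ) := by
  rw [Int.fract_div_natCast_eq_div_natCast_mod, mul_div_cancel₀ _ (NeZero.ne (b : k))]

section Digits

variable {q : ℕ}

theorem digitVec_eq_natCast (n i : ℕ) : digitVec q n i = (n / q ^ i : ℕ) :=
  ZMod.natCast_mod _ _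

theorem digitVec_div_pow (n a i : ℕ) : digitVec q (n / q ^ a) i = digitVec q n (a + i) := by
  rw [digitVec_eq_natCast, digitVec_eq_natCast, Nat.div_div_eq_div_mul, pow_add]

theorem digitVec_eq_zero_of_lt_pow {n i : ℕ} (hn : n < q ^ i) : digitVec q n i = 0 := by
  rw [digitVec_eq_natCast, Nat.div_eq_of_lt hn, Nat.cast_zero]

theorem sum_Ico_mul_digitVec (b : ℕ → ZMod q) (a m n : ℕ) :
    ∑ i ∈ Finset.Ico a m, b i * digitVec q n i
      = ∑ i ∈ Finset.range (m - a), b (a + i) * digitVec q (n / q ^ a) i := by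
  simp only [Finset.sum_Ico_eq_sum_range, digitVec_div_pow]

theorem sum_range_mul_digitVec_of_forall_lt_eq_zero {b : ℕ → ZMod q} {w m : ℕ} (hwm : w < m)
    (hb : ∀ i < w, b i = 0) (n : ℕ) :
    ∑ i ∈ Finset.range m, b i * digitVec q n i
      = ∑ i ∈ Finset.Ico (w + 1) m, b i * digitVec q n i + b w * digitVec q n w := by
  have hlow : ∑ i ∈ Finset.range w, b i * digitVec q n i = 0 :=
    Finset.sum_eq_zero fun i hi => by rw [hb i (Finset.mem_range.1 hi), zero_mul]
  rw [← Finset.sum_range_add_sum_Ico _ hwm.le, hlow, zero_add,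
    Finset.sum_eq_sum_Ico_succ_bot hwm, add_comm]

theorem sum_range_mul_digitVec_eq_of_lt_pow (hq : 1 < q) (f : ℕ → ZMod q) {n m : ℕ}
    (hn : n < q ^ m) :
    ∑ i ∈ Finset.range (n + 1), f i * digitVec q n i
      = ∑ i ∈ Finset.range m, f i * digitVec q n i := by
  have extend {a c : ℕ} (hac : a ≤ c) (ha : n < q ^ a) :
      ∑ i ∈ Finset.range a, f i * digitVec q n i = ∑ i ∈ Finset.range c, f i * digitVec q n i := by
    refine Finset.sum_subset (Finset.range_mono hac) fun i _ hi => ?_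
    have hai : a ≤ i := not_lt.1 (mt Finset.mem_range.2 hi)
    rw [digitVec_eq_zero_of_lt_pow (ha.trans_le (Nat.pow_le_pow_right hq.le hai)), mul_zero]
  have hn' : n < q ^ (n + 1) := (Nat.lt_succ_self n).trans (Nat.lt_pow_self hq)
  rw [extend (le_max_left (n + 1) m) hn', extend (le_max_right (n + 1) m) hn]

theorem sum_digitVec_mul_matVec (C : ℕ → ℕ → ZMod q) (k n : ℕ) :
    ∑ i ∈ Finset.range (k + 1), digitVec q k i * matVec C n i
      = ∑ l ∈ Finset.range (n + 1), matVec (transp C) k l * digitVec q n l := by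
  simp only [matVec, transp, Finset.mul_sum, Finset.sum_mul]
  rw [Finset.sum_comm]
  refine Finset.sum_congr rfl fun l _ => Finset.sum_congr rfl fun i _ => ?_
  ring

end Digits

section AdditiveCharacters

theorem addChar_sum_eq_prod {A M ι : Type*} [AddCommMonoid A] [CommMonoid M] (ψ : AddChar A M)
    (s : Finset ι) (f : ι → A) : ψ (∑ i ∈ s, f i) = ∏ i ∈ s, ψ (f i) :=
  map_prod ψ.toMonoidHom (fun i => Multiplicative.ofAdd (f i)) s

theorem addChar_pow_char_eq_one {R M : Type*} [NonAssocSemiring R] [Monoid M] (ψ : AddChar R M)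
    (p : ℕ) [CharP R p] (c : R) : ψ c ^ p = 1 := by
  rw [← AddChar.map_nsmul_eq_pow, nsmul_eq_mul, CharP.cast_eq_zero, zero_mul,
    AddChar.map_zero_eq_one]

theorem addChar_mul_digitVec {q : ℕ} {M : Type*} [Monoid M] (ψ : AddChar (ZMod q) M)
    (c : ZMod q) (n i : ℕ) : ψ (c * digitVec q n i) = ψ c ^ (n / q ^ i) := by
  rw [digitVec_eq_natCast, mul_comm, ← nsmul_eq_mul, AddChar.map_nsmul_eq_pow]

theorem sum_range_addChar_mul_digitVec {q : ℕ} {K : Type*} [Field K] (ψ : AddChar (ZMod q) K)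
    {b : ℕ → ZMod q} {w m : ℕ} (hwm : w < m) (hb : ∀ i < w, b i = 0) (hψ : ψ (b w) ≠ 1) (N : ℕ) :
    ∑ n ∈ Finset.range N, ψ (∑ i ∈ Finset.range m, b i * digitVec q n i)
      = ψ (∑ i ∈ Finset.Ico (w + 1) m, b i * digitVec q N i) *
        ((q : K) ^ w * ((ψ (b w * digitVec q N w) - 1) / (ψ (b w) - 1))
          + (N % q ^ w : ℕ) * ψ (b w * digitVec q N w)) := by
  let g (u : ℕ) : K := ψ (∑ i ∈ Finset.range (m - (w + 1)), b (w + 1 + i) * digitVec q u i)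
  have hg (n : ℕ) :
      ψ (∑ i ∈ Finset.Ico (w + 1) m, b i * digitVec q n i) = g (n / q ^ w / q) := by
    rw [sum_Ico_mul_digitVec, Nat.div_div_eq_div_mul, ← pow_succ]
  have hsummand (n : ℕ) : ψ (∑ i ∈ Finset.range m, b i * digitVec q n i)
      = g (n / q ^ w / q) * ψ (b w) ^ (n / q ^ w) := by
    rw [sum_range_mul_digitVec_of_forall_lt_eq_zero hwm hb, AddChar.map_add_eq_mul, hg,
      addChar_mul_digitVec]
  simp only [hsummand, hg, addChar_mul_digitVec]
  rw [sum_range_comp_div (fun t => g (t / q) * ψ (b w) ^ t),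
    sum_range_comp_div_mul_pow (addChar_pow_char_eq_one ψ q (b w)) hψ, nsmul_eq_mul, nsmul_eq_mul,
    Nat.cast_pow]
  ring

end AdditiveCharacters

section Walsh

variable {q : ℕ}

theorem Gfun_of_forall_lt_eq_zero {m : ℕ} {b : ℕ → ZMod q} (hb : ∀ i < m, b i = 0) (N : ℕ) :
    Gfun q m N b = N :=
  if_pos hb

variable [NeZero q]

theorem Gfun_of_isLeast {w m : ℕ} {b : ℕ → ZMod q} (hw : IsLeast {i | b i ≠ 0} w) (hwm : w < m)
    (N : ℕ) :
    Gfun q m N b = ZMod.stdAddChar (∑ i ∈ Finset.Ico (w + 1) m, b i * digitVec q N i) *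
      ((q : ℂ) ^ w *
          ((ZMod.stdAddChar (b w * digitVec q N w) - 1) / (ZMod.stdAddChar (b w) - 1))
        + (N % q ^ w : ℕ) * ZMod.stdAddChar (b w * digitVec q N w)) := by
  have hfract : (q : ℂ) ^ w * (Int.fract ((N : ℝ) / (q : ℝ) ^ w) : ℝ) = (N % q ^ w : ℕ) := by
    exact_mod_cast natCast_mul_fract_div (k := ℝ) N (q ^ w)
  rw [Gfun, if_neg fun h => hw.1 (h w hwm), hw.csInf_eq, ← hfract]
  simp only [omega_pow_val]
  ring

theorem sum_range_stdAddChar_mul_digitVec (b : ℕ → ZMod q) (m N : ℕ) :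
    ∑ n ∈ Finset.range N, ZMod.stdAddChar (∑ i ∈ Finset.range m, b i * digitVec q n i)
      = Gfun q m N b := by
  by_cases hb : ∀ i < m, b i = 0
  · have hsummand (n : ℕ) : ∑ i ∈ Finset.range m, b i * digitVec q n i = 0 :=
      Finset.sum_eq_zero fun i hi => by rw [hb i (Finset.mem_range.1 hi), zero_mul]
    simp [hsummand, Gfun_of_forall_lt_eq_zero hb]
  · push Not at hb
    obtain ⟨i, him, hi⟩ := hb
    obtain ⟨w, hw⟩ : ∃ w, IsLeast {i | b i ≠ 0} w := ⟨_, Nat.isLeast_find ⟨i, hi⟩⟩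
    have hwm : w < m := (hw.2 hi).trans_lt him
    have hlow : ∀ l < w, b l = 0 := fun l hl => not_not.1 fun hbl => hl.not_ge (hw.2 hbl)
    have hψ : ZMod.stdAddChar (b w) ≠ 1 := fun h =>
      hw.1 (ZMod.injective_stdAddChar (h.trans (AddChar.map_zero_eq_one _).symm))
    rw [sum_range_addChar_mul_digitVec ZMod.stdAddChar hwm hlow hψ, Gfun_of_isLeast hw hwm]

theorem wal_matVec (hq : 1 < q) (C : ℕ → ℕ → ZMod q) (k : ℕ) {n m : ℕ} (hn : n < q ^ m) :
    wal q k (matVec C n)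
      = ZMod.stdAddChar (∑ l ∈ Finset.range m, matVec (transp C) k l * digitVec q n l) := by
  rw [wal, omega_pow_val, sum_digitVec_mul_matVec, sum_range_mul_digitVec_eq_of_lt_pow hq _ hn]

theorem prod_wal_matVec {ι : Type*} [Fintype ι] (hq : 1 < q) (C : ι → ℕ → ℕ → ZMod q)
    (k : ι → ℕ) {n m : ℕ} (hn : n < q ^ m) :
    ∏ j, wal q (k j) (matVec (C j) n)
      = ZMod.stdAddChar (∑ l ∈ Finset.range m,
          (∑ j, matVec (transp (C j)) (k j) l) * digitVec q n l) := by
  simp only [wal_matVec hq _ _ hn, ← addChar_sum_eq_prod, Finset.sum_mul]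
  rw [Finset.sum_comm]

end Walsh

theorem walsh_sum_digital_sequence_eq_Gfun_general {q : ℕ} (hq : 1 < q) {ι : Type*} [Fintype ι]
    (C : ι → ℕ → ℕ → ZMod q) {m N : ℕ} (hN : N ≤ q ^ m) (k : ι → ℕ) :
    ∑ n ∈ Finset.range N, ∏ j, wal q (k j) (matVec (C j) n)
      = Gfun q m N (fun i => ∑ j, matVec (transp (C j)) (k j) i) := by
  have : NeZero q := ⟨(zero_lt_one.trans hq).ne'⟩
  rw [← sum_range_stdAddChar_mul_digitVec]
  exact Finset.sum_congr rfl fun n hn =>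
    prod_wal_matVec hq C k ((Finset.mem_range.1 hn).trans_le hN)

/-- **The Walsh exponential sum of a digital sequence.**  For `N < q^m` and
`k₁, …, k_s < q^m` not all zero,
`Σ_{n=0}^{N−1} Π_{j=1}^s wal_{k_j}(C_j n⃗) = G(N, b⃗)` with
`b⃗ = C₁ᵀk⃗₁ + ⋯ + C_sᵀk⃗_s`. -/
theorem walsh_sum_digital_sequence_eq_Gfun (q s : ℕ) (hq : q.Prime) (hs : 1 ≤ s)
    (C : Fin s → ℕ → ℕ → ZMod q) (m : ℕ) (hm : 1 ≤ m)
    (N : ℕ) (hN : 1 ≤ N) (hNm : N < q ^ m)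
    (k : Fin s → ℕ) (hk : ∀ j, k j < q ^ m) (hk0 : ∃ j, k j ≠ 0) :
    ∑ n ∈ Finset.range N, ∏ j, wal q (k j) (matVec (C j) n)
      = Gfun q m N (fun i => ∑ j, matVec (transp (C j)) (k j) i) :=
  walsh_sum_digital_sequence_eq_Gfun_general hq.one_lt C hNm.le k

end
end
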